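/- arXiv:1209.3577 — 5 statements merged into one kernel-verified Lean document; each statement's English description precedes it below -/
import Mathlib

section
/- For every real number x ≥ 1 that is not an integer, one has | x ( H(x) − log x − γ + (γ − 1)((2{x} − 1)x − {x}² + {x})/x² ) | ≤ 1; equivalently, the function ε₃ is differentiable at every non-integer x ≥ 1 and satisfies |x ε₃'(x)| ≤ 1 there. -/
/-- `H(x) = ∑_{n ≤ x} 1/n`. -/
noncomputable def harmonicSum (x : ℝ) : ℝ := ∑ n ∈ Finset.Icc 1 ⌊x⌋₊, (1 : ℝ) / n

/-- `ε₂(x) = ∫_x^∞ ({t} - 1/2) t⁻² dt`. -/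
noncomputable def eps2 (x : ℝ) : ℝ := ∫ t in Set.Ioi x, (Int.fract t - 1 / 2) / t ^ 2

/-- `ε₃(x) = γ - 1/2 + x ε₂(x) + (γ - 1)({x}² - {x})/x`. -/
noncomputable def eps3 (x : ℝ) : ℝ :=
  Real.eulerMascheroniConstant - 1 / 2 + x * eps2 x
    + (Real.eulerMascheroniConstant - 1) * (Int.fract x ^ 2 - Int.fract x) / x

/-! Euler–Maclaurin summation gives `ε₂(x) = H(x) - log x - γ + ({x} - 1/2)/x`, so the derivative
of `x ε₂(x)` is `H(x) - log x - γ` and that of `ε₃` is the explicit expression to be bounded.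
Since `{x} = x - n` on `[n, n + 1)`, there
`x ε₃'(x) = x (H_n - log x - γ) - (1 - γ)(x - n(n + 1)/x)`,
which is `-x log x - x` for `n = 0` and decreasing for `n ≥ 1`. With `a_n = n (H_n - log n - γ)`,
it then falls from `a_n + (1 - γ)` to `a_{n+1} - (1 - γ) - 1`, and `1 - γ ≤ a_n ≤ 1/2` keeps both
ends in `[-1, 1]`. The upper bound on `a_n` is the trapezoid rule for `1/t`. For the lower bound,
`a_1 = 1 - γ` and `a` is increasing: with `φ(t) = t log t`,
`a_{n+1} - a_n = H_n - (φ(n + 1) - φ(n)) + 1 - γ`, which tends to `0` and decreases because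
`φ(q + 1) - 2 φ(q) + φ(q - 1) ≥ 1/q`. -/

section

open Filter MeasureTheory Real Set Topology

local notation "γ" => eulerMascheroniConstant

theorem natCast_floor_eq_sub_fract {R : Type*} [Ring R] [LinearOrder R] [IsStrictOrderedRing R]
    [FloorRing R] {x : R} (hx : 0 ≤ x) : (⌊x⌋₊ : R) = x - Int.fract x := by
  rw [natCast_floor_eq_intCast_floor hx, Int.self_sub_fract]

theorem hasDerivAt_fract {x : ℝ} (hx : x ≠ ⌊x⌋) : HasDerivAt Int.fract (1 : ℝ) x := by
  refine ((hasDerivAt_id x).sub_const (⌊x⌋ : ℝ)).congr_of_eventuallyEq ?_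
  filter_upwards [Ico_mem_nhds ((Int.floor_le x).lt_of_ne hx.symm) (Int.lt_floor_add_one x)]
    with y hy
  rw [Int.fract, Int.floor_eq_iff.2 hy, id]

theorem hasDerivAt_integral_Ioi {E : Type*} [NormedAddCommGroup E] [NormedSpace ℝ E]
    [CompleteSpace E] {f : ℝ → E} {a x : ℝ} (hf : IntegrableOn f (Ioi a)) (hax : a < x)
    (hx : ContinuousAt f x) : HasDerivAt (fun y ↦ ∫ t in Ioi y, f t) (-f x) x := by
  have hmeas : StronglyMeasurableAtFilter f (𝓝 x) :=
    ⟨Ioi a, Ioi_mem_nhds hax, hf.aestronglyMeasurable⟩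
  have hderiv := (intervalIntegral.integral_hasDerivAt_right
    (IntervalIntegrable.refl (a := x)) hmeas hx).const_sub (∫ t in Ioi x, f t)
  refine hderiv.congr_of_eventuallyEq ?_
  filter_upwards [Ioi_mem_nhds hax] with y hy
  rw [← intervalIntegral.integral_Ioi_sub_Ioi' (hf.mono_set (Ioi_subset_Ioi hax.le))
    (hf.mono_set (Ioi_subset_Ioi (le_of_lt hy))), sub_sub_cancel]

-- First-order Euler–Maclaurin: Abel summation, followed by an integration by parts of `t + 1 / 2`.
theorem sum_Ioc_floor_eq_integral_add {f f' : ℝ → ℝ} {a b : ℝ} (ha : 0 ≤ a) (hab : a ≤ b)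
    (hf : ∀ t ∈ Icc a b, HasDerivAt f (f' t) t) (hf' : IntegrableOn f' (Icc a b)) :
    ∑ k ∈ Finset.Ioc ⌊a⌋₊ ⌊b⌋₊, f k = (∫ t in a..b, f t) +
      (∫ t in a..b, (Int.fract t - 1 / 2) * f' t) -
        (Int.fract b - 1 / 2) * f b + (Int.fract a - 1 / 2) * f a := by
  have hint : IntervalIntegrable f' volume a b :=
    (intervalIntegrable_iff_integrableOn_Icc_of_le hab).2 hf'
  have hcount {t : ℝ} (ht : 0 ≤ t) :
      ∑ _k ∈ Finset.Icc 0 ⌊t⌋₊, (1 : ℝ) = t + 1 - Int.fract t := by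
    rw [Finset.sum_const, Nat.card_Icc, nsmul_one, Nat.sub_zero, Nat.cast_succ,
      natCast_floor_eq_sub_fract ht, sub_add_eq_add_sub]
  have hstep : IntervalIntegrable (fun t ↦ f' t * ∑ _k ∈ Finset.Icc 0 ⌊t⌋₊, (1 : ℝ)) volume a b :=
    (intervalIntegrable_iff_integrableOn_Icc_of_le hab).2 (integrableOn_mul_sum_Icc _ ha hf')
  have hsplit : ∫ t in a..b, (Int.fract t - 1 / 2) * f' t = (∫ t in a..b, (t + 1 / 2) * f' t) -
      ∫ t in a..b, f' t * ∑ _k ∈ Finset.Icc 0 ⌊t⌋₊, (1 : ℝ) := by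
    rw [← intervalIntegral.integral_sub (hint.continuousOn_mul (by fun_prop)) hstep]
    refine intervalIntegral.integral_congr fun t ht ↦ ?_
    rw [uIcc_of_le hab] at ht
    simp only [hcount (ha.trans ht.1)]
    ring
  have hparts := intervalIntegral.integral_mul_deriv_eq_deriv_mul (u := fun t : ℝ ↦ t + 1 / 2)
    (fun t _ ↦ (hasDerivAt_id t).add_const (1 / 2 : ℝ)) (by simpa only [uIcc_of_le hab] using hf)
    intervalIntegrable_const hint
  have habel := sum_mul_eq_sub_sub_integral_mul (fun _ ↦ (1 : ℝ)) ha hab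
    (fun t ht ↦ (hf t ht).differentiableAt)
    (hf'.congr_fun (fun t ht ↦ (hf t ht).deriv.symm) measurableSet_Icc)
  rw [setIntegral_congr_fun measurableSet_Ioc
    (g := fun t ↦ f' t * ∑ _k ∈ Finset.Icc 0 ⌊t⌋₊, (1 : ℝ)) fun t ht ↦ by
      simp only [(hf t (Ioc_subset_Icc_self ht)).deriv], ← intervalIntegral.integral_of_le hab,
      hcount ha, hcount (ha.trans hab)] at habel
  simp only [mul_one, one_mul] at habel hparts
  rw [habel, hsplit, hparts]
  ring

theorem integrableOn_fract_sub_half_div_sq {x : ℝ} (hx : 0 < x) :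
    IntegrableOn (fun t : ℝ ↦ (Int.fract t - 1 / 2) / t ^ 2) (Ioi x) := by
  have hsq : IntegrableOn (fun t : ℝ ↦ (t ^ 2)⁻¹) (Ioi x) :=
    (integrableOn_Ioi_rpow_of_lt (by norm_num : (-2 : ℝ) < -1) hx).congr_fun
      (fun t ht ↦ by simp [rpow_neg (hx.trans ht).le]) measurableSet_Ioi
  simp only [div_eq_mul_inv _ (_ ^ 2)]
  refine hsq.bdd_mul (c := 1 / 2) (by fun_prop) (.of_forall fun t ↦ ?_)
  rw [norm_eq_abs, abs_le]
  constructor <;> linarith [Int.fract_nonneg t, Int.fract_lt_one t]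

theorem harmonicSum_eq_harmonic_floor (x : ℝ) : harmonicSum x = harmonic ⌊x⌋₊ := by
  rw [harmonicSum, harmonic_eq_sum_Icc]
  push_cast
  simp only [one_div]

theorem harmonicSum_sub_harmonicSum {x y : ℝ} (hx : 0 < x) (hxy : x ≤ y) :
    harmonicSum y - harmonicSum x = log y - log x - (∫ t in x..y, (Int.fract t - 1 / 2) / t ^ 2) -
      (Int.fract y - 1 / 2) / y + (Int.fract x - 1 / 2) / x := by
  have hy : 0 < y := hx.trans_le hxy
  have hne {t : ℝ} (ht : t ∈ Icc x y) : t ≠ 0 := (hx.trans_le ht.1).ne'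
  have hsum : harmonicSum y - harmonicSum x = ∑ k ∈ Finset.Ioc ⌊x⌋₊ ⌊y⌋₊, (k : ℝ)⁻¹ := by
    have hIoc (z : ℝ) : harmonicSum z = ∑ k ∈ Finset.Ioc 0 ⌊z⌋₊, (k : ℝ)⁻¹ := by
      simp only [harmonicSum, one_div, ← Finset.Icc_add_one_left_eq_Ioc, zero_add]
    rw [hIoc, hIoc, sub_eq_iff_eq_add',
      Finset.sum_Ioc_consecutive _ (Nat.zero_le _) (Nat.floor_mono hxy)]
  have hint : IntegrableOn (fun t : ℝ ↦ -(t ^ 2)⁻¹) (Icc x y) :=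
    ContinuousOn.integrableOn_Icc <|
      ((continuousOn_pow 2).inv₀ fun t ht ↦ pow_ne_zero 2 (hne ht)).neg
  rw [hsum, sum_Ioc_floor_eq_integral_add hx.le hxy (fun t ht ↦ hasDerivAt_inv (hne ht)) hint,
    integral_inv_of_pos hx hy, log_div hy.ne' hx.ne']
  simp only [mul_neg, intervalIntegral.integral_neg, ← div_eq_mul_inv]
  ring

theorem tendsto_harmonic_sub_log_sub_half_div :
    Tendsto (fun n : ℕ ↦ (harmonic n : ℝ) - log n - 1 / 2 / n) atTop (𝓝 γ) := by
  simpa only [sub_zero] using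
    tendsto_harmonic_sub_log.sub (tendsto_const_div_atTop_nhds_zero_nat (1 / 2))

theorem eps2_eq_harmonicSum_sub_log {x : ℝ} (hx : 0 < x) :
    eps2 x = harmonicSum x - log x - γ + (Int.fract x - 1 / 2) / x := by
  have hint : Tendsto (fun m : ℕ ↦ ∫ t in x..m, (Int.fract t - 1 / 2) / t ^ 2) atTop
      (𝓝 (eps2 x)) :=
    intervalIntegral_tendsto_integral_Ioi x (integrableOn_fract_sub_half_div_sq hx)
      tendsto_natCast_atTop_atTop
  have heq : ∀ᶠ m : ℕ in atTop, ∫ t in x..m, (Int.fract t - 1 / 2) / t ^ 2 =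
      harmonicSum x - log x + (Int.fract x - 1 / 2) / x - (harmonic m - log m - 1 / 2 / m) := by
    filter_upwards [eventually_ge_atTop ⌈x⌉₊] with m hm
    have hsub := harmonicSum_sub_harmonicSum hx (Nat.ceil_le.1 hm)
    rw [harmonicSum_eq_harmonic_floor m, Nat.floor_natCast, Int.fract_natCast, zero_sub,
      neg_div] at hsub
    linarith
  rw [tendsto_nhds_unique (hint.congr' heq) (tendsto_harmonic_sub_log_sub_half_div.const_sub _)]
  ring

theorem hasDerivAt_eps2 {x : ℝ} (hx : 0 < x) (hxi : x ≠ ⌊x⌋) :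
    HasDerivAt eps2 (-((Int.fract x - 1 / 2) / x ^ 2)) x :=
  have hfract : ContinuousAt Int.fract x := (hasDerivAt_fract hxi).continuousAt
  hasDerivAt_integral_Ioi (integrableOn_fract_sub_half_div_sq (half_pos hx)) (half_lt_self hx)
    ((hfract.sub_const _).div (continuousAt_id.pow 2) (pow_ne_zero 2 hx.ne'))

/-- The derivative of `eps3` at a positive non-integer, as an explicit function on all of `ℝ`. -/
noncomputable def eps3Deriv (x : ℝ) : ℝ :=
  harmonicSum x - log x - γ
    + (γ - 1) * ((2 * Int.fract x - 1) * x - Int.fract x ^ 2 + Int.fract x) / x ^ 2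

theorem hasDerivAt_eps3 {x : ℝ} (hx : 0 < x) (hxi : x ≠ ⌊x⌋) :
    HasDerivAt eps3 (eps3Deriv x) x := by
  have hfract := hasDerivAt_fract hxi
  have hmul := (hasDerivAt_id x).mul (hasDerivAt_eps2 hx hxi)
  have hdiv := (((hfract.pow 2).sub hfract).const_mul (γ - 1)).div (hasDerivAt_id x) hx.ne'
  refine ((hmul.const_add (γ - 1 / 2)).add hdiv).congr_deriv ?_
  simp only [eps2_eq_harmonicSum_sub_log hx, eps3Deriv, id, Pi.sub_apply, Pi.pow_apply]
  field_simp
  ring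

theorem hasDerivAt_add_mul_log_add_sub_mul_log {q h : ℝ} (hadd : q + h ≠ 0) (hsub : q - h ≠ 0) :
    HasDerivAt (fun s ↦ (q + s) * log (q + s) + (q - s) * log (q - s))
      (log (q + h) - log (q - h)) h :=
  (((hasDerivAt_mul_log hadd).comp_const_add q h).add
    ((hasDerivAt_mul_log hsub).comp_const_sub q h)).congr_deriv (by ring)

theorem two_mul_div_le_log_add_sub_log_sub {q h : ℝ} (hh : 0 ≤ h) (hq : h < q) :
    2 * h / q ≤ log (q + h) - log (q - h) := by
  have hq0 : 0 < q := hh.trans_lt hq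
  have hsub : 0 < q - h := sub_pos.2 hq
  calc 2 * h / q = 2 * (2 * h / (q - h)) / (2 * h / (q - h) + 2) := by field_simp; ring
    _ ≤ log (1 + 2 * h / (q - h)) := le_log_one_add_of_nonneg (by positivity)
    _ = log ((q + h) / (q - h)) := by congr 1; field_simp; ring
    _ = log (q + h) - log (q - h) := log_div (by positivity) hsub.ne'

theorem sq_div_le_mul_log_second_difference {q h : ℝ} (hh : 0 ≤ h) (hq : h ≤ q) :
    h ^ 2 / q ≤ (q + h) * log (q + h) + (q - h) * log (q - h) - 2 * (q * log q) := by
  let g : ℝ → ℝ := fun s ↦ (q + s) * log (q + s) + (q - s) * log (q - s) - s ^ 2 / q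
  have hcont : Continuous g :=
    ((continuous_mul_log.comp (continuous_const_add q)).add
      (continuous_mul_log.comp (continuous_const.sub continuous_id))).sub (by fun_prop)
  have hderiv {s : ℝ} (hs : s ∈ Ioo 0 q) :
      HasDerivAt g (log (q + s) - log (q - s) - 2 * s / q) s := by
    have hlog := hasDerivAt_add_mul_log_add_sub_mul_log
      (add_pos (hs.1.trans hs.2) hs.1).ne' (sub_pos.2 hs.2).ne'
    exact (hlog.sub ((hasDerivAt_pow 2 s).div_const q)).congr_deriv (by norm_num)
  have hmono : MonotoneOn g (Icc 0 q) := by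
    refine monotoneOn_of_hasDerivWithinAt_nonneg (convex_Icc 0 q) hcont.continuousOn
      (fun s hs ↦ (hderiv (by rwa [interior_Icc] at hs)).hasDerivWithinAt) fun s hs ↦ ?_
    rw [interior_Icc] at hs
    exact sub_nonneg.2 (two_mul_div_le_log_add_sub_log_sub hs.1.le hs.2)
  have hle : g 0 ≤ g h := hmono ⟨le_rfl, hh.trans hq⟩ ⟨hh, hq⟩ hh
  simp only [g, add_zero, sub_zero, zero_pow two_ne_zero, zero_div] at hle
  linarith

theorem antitone_harmonic_sub_mul_log_sub :
    Antitone fun n : ℕ ↦ (harmonic n : ℝ) - ((n + 1) * log (n + 1) - n * log n) := by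
  refine antitone_nat_of_succ_le fun n ↦ ?_
  have hsq := sq_div_le_mul_log_second_difference (q := n + 1) zero_le_one (by simp)
  simp only [add_sub_cancel_right, one_pow] at hsq
  rw [harmonic_succ]
  push_cast
  rw [← one_div]
  linarith

theorem mul_log_sub_mul_log_le {a b : ℝ} (ha : 0 ≤ a) (hb : 0 < b) :
    b * log b - a * log a ≤ (b - a) * (log b + 1) := by
  rcases ha.eq_or_lt with rfl | ha
  · linarith
  have hlog : a * (log b - log a) ≤ b - a := by
    calc a * (log b - log a) = a * log (b / a) := by rw [log_div hb.ne' ha.ne']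
      _ ≤ a * (b / a - 1) := by gcongr; exact log_le_sub_one_of_pos (div_pos hb ha)
      _ = b - a := by field_simp
  linarith

theorem sub_one_le_harmonic_sub_mul_log_sub (n : ℕ) :
    γ - 1 ≤ harmonic n - ((n + 1) * log (n + 1) - n * log n) := by
  refine le_of_tendsto (tendsto_harmonic_sub_log_add_one.sub_const 1) ?_
  filter_upwards [eventually_ge_atTop n] with m hm
  have htangent := mul_log_sub_mul_log_le m.cast_nonneg (m.cast_add_one_pos (α := ℝ))
  rw [add_sub_cancel_left, one_mul] at htangent
  linarith [antitone_harmonic_sub_mul_log_sub hm]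

theorem monotone_mul_harmonic_sub_log_sub :
    Monotone fun n : ℕ ↦ n * (harmonic n - log n - γ) := by
  refine monotone_nat_of_le_succ fun n ↦ sub_nonneg.1 ?_
  calc 0 ≤ harmonic n - ((n + 1) * log (n + 1) - n * log n) - (γ - 1) :=
        sub_nonneg.2 (sub_one_le_harmonic_sub_mul_log_sub n)
    _ = ↑(n + 1) * (harmonic (n + 1) - log ↑(n + 1) - γ) - n * (harmonic n - log n - γ) := by
        rw [harmonic_succ]
        push_cast
        field_simp
        ring

theorem one_sub_le_mul_harmonic_sub_log_sub {n : ℕ} (hn : n ≠ 0) :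
    1 - γ ≤ n * (harmonic n - log n - γ) := by
  simpa using monotone_mul_harmonic_sub_log_sub (Nat.one_le_iff_ne_zero.2 hn)

theorem log_sub_log_le_trapezoid {a b : ℝ} (ha : 0 < a) (hab : a ≤ b) :
    log b - log a ≤ (b - a) * ((1 / a + 1 / b) / 2) := by
  have hb : 0 < b := ha.trans_le hab
  calc log b - log a = log (b / a) := (log_div hb.ne' ha.ne').symm
    _ ≤ sinh (log (b / a)) := self_le_sinh_iff.2 (log_nonneg ((one_le_div ha).2 hab))
    _ = (b / a - (b / a)⁻¹) / 2 := sinh_log (div_pos hb ha)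
    _ = (b - a) * ((1 / a + 1 / b) / 2) := by field_simp; ring

theorem monotone_harmonic_sub_log_sub_half_div :
    Monotone fun n : ℕ ↦ (harmonic n : ℝ) - log n - 1 / 2 / n := by
  refine monotone_nat_of_le_succ fun n ↦ ?_
  rcases n.eq_zero_or_pos with rfl | hn
  · norm_num
  have htrap := log_sub_log_le_trapezoid (Nat.cast_pos.2 hn) (lt_add_one (n : ℝ)).le
  rw [harmonic_succ]
  push_cast
  field_simp at htrap ⊢
  linarith

theorem mul_harmonic_sub_log_sub_le_half (n : ℕ) : n * (harmonic n - log n - γ) ≤ 1 / 2 := by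
  rcases n.eq_zero_or_pos with rfl | hn
  · norm_num
  rw [mul_comm, ← le_div_iff₀ (Nat.cast_pos.2 hn)]
  linarith [monotone_harmonic_sub_log_sub_half_div.ge_of_tendsto
    tendsto_harmonic_sub_log_sub_half_div n]

/-- The smooth function that agrees with `x ε₃'(x)` on `(n, n + 1)`, where `{x} = x - n`;
it is defined up to the endpoints so that its values there bound it by monotonicity. -/
noncomputable def mulDerivBranch (n : ℕ) (y : ℝ) : ℝ :=
  y * (harmonic n - log y - γ) - (1 - γ) * (y - n * (n + 1) / y)

theorem mul_eps3Deriv_eq_mulDerivBranch {x : ℝ} (hx : 0 < x) :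
    x * eps3Deriv x = mulDerivBranch ⌊x⌋₊ x := by
  rw [eps3Deriv, mulDerivBranch, harmonicSum_eq_harmonic_floor, natCast_floor_eq_sub_fract hx.le]
  field_simp
  ring

theorem mulDerivBranch_self {n : ℕ} (hn : n ≠ 0) :
    mulDerivBranch n n = n * (harmonic n - log n - γ) + (1 - γ) := by
  rw [mulDerivBranch, mul_div_cancel_left₀ _ (Nat.cast_ne_zero.2 hn)]
  ring

theorem mulDerivBranch_add_one (n : ℕ) :
    mulDerivBranch n (n + 1) =
      ↑(n + 1) * (harmonic (n + 1) - log ↑(n + 1) - γ) - (1 - γ) - 1 := by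
  rw [mulDerivBranch, harmonic_succ]
  push_cast
  field_simp
  ring

theorem mulDerivBranch_zero (y : ℝ) : mulDerivBranch 0 y = negMulLog y - y := by
  rw [mulDerivBranch, harmonic_zero, negMulLog]
  push_cast
  ring

theorem antitoneOn_mul_const_sub_log (c : ℝ) :
    AntitoneOn (fun y ↦ y * (c - log y)) (Ici (exp (c - 1))) := by
  have hderiv {y : ℝ} (hy : 0 < y) : HasDerivAt (fun y ↦ y * (c - log y)) (c - 1 - log y) y :=
    ((hasDerivAt_id y).mul ((hasDerivAt_log hy.ne').const_sub c)).congr_deriv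
      (by simp only [id]; field_simp; ring)
  have hpos {y : ℝ} (hy : exp (c - 1) ≤ y) : 0 < y := (exp_pos _).trans_le hy
  refine antitoneOn_of_hasDerivWithinAt_nonpos (convex_Ici _)
    (fun y hy ↦ (hderiv (hpos hy)).continuousAt.continuousWithinAt)
    (fun y hy ↦ (hderiv (hpos (interior_subset hy))).hasDerivWithinAt) fun y hy ↦ ?_
  exact sub_nonpos.2 ((le_log_iff_exp_le (hpos (interior_subset hy))).2 (interior_subset hy))

theorem exp_harmonic_sub_sub_one_le {n : ℕ} (hn : n ≠ 0) : exp (harmonic n - γ - 1) ≤ n := by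
  rw [← le_log_iff_exp_le (Nat.cast_pos.2 hn.bot_lt)]
  linarith [harmonic_le_one_add_log n, one_half_lt_eulerMascheroniConstant]

theorem antitoneOn_mulDerivBranch {n : ℕ} (hn : n ≠ 0) :
    AntitoneOn (mulDerivBranch n) (Ici n) := by
  intro y hy z hz hyz
  have hexp := exp_harmonic_sub_sub_one_le hn
  have hlog := antitoneOn_mul_const_sub_log (harmonic n - γ) (hexp.trans hy) (hexp.trans hz) hyz
  have hy0 : 0 < y := (Nat.cast_pos.2 hn.bot_lt).trans_le hy
  have hrat : y - n * (n + 1) / y ≤ z - n * (n + 1) / z := by gcongr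
  have hγ : 0 ≤ 1 - γ := by linarith [eulerMascheroniConstant_lt_two_thirds]
  simp only [mulDerivBranch, sub_right_comm _ (log _)]
  exact sub_le_sub hlog (mul_le_mul_of_nonneg_left hrat hγ)

theorem abs_mulDerivBranch_zero_le_one {y : ℝ} (hy : y ∈ Icc (0 : ℝ) 1) :
    |mulDerivBranch 0 y| ≤ 1 := by
  rw [mulDerivBranch_zero, abs_le]
  constructor
  · linarith [negMulLog_nonneg hy.1 hy.2, hy.2]
  · linarith [negMulLog_le_one_sub_self hy.1, hy.1]

theorem abs_mulDerivBranch_le_one {n : ℕ} {y : ℝ} (hy : y ∈ Icc (n : ℝ) (n + 1)) :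
    |mulDerivBranch n y| ≤ 1 := by
  rcases eq_or_ne n 0 with rfl | hn
  · exact abs_mulDerivBranch_zero_le_one (by simpa using hy)
  have hanti := antitoneOn_mulDerivBranch hn
  rw [abs_le]
  constructor
  · calc -1 ≤ mulDerivBranch n (n + 1) := by
          rw [mulDerivBranch_add_one]
          linarith [one_sub_le_mul_harmonic_sub_log_sub n.succ_ne_zero]
      _ ≤ mulDerivBranch n y := hanti hy.1 (hy.1.trans hy.2) hy.2
  · calc mulDerivBranch n y ≤ mulDerivBranch n n := hanti self_mem_Ici hy.1 hy.1
      _ ≤ 1 := by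
          rw [mulDerivBranch_self hn]
          linarith [mul_harmonic_sub_log_sub_le_half n, one_half_lt_eulerMascheroniConstant]

theorem abs_mul_eps3Deriv_le_one {x : ℝ} (hx : 0 < x) : |x * eps3Deriv x| ≤ 1 := by
  rw [mul_eps3Deriv_eq_mulDerivBranch hx]
  exact abs_mulDerivBranch_le_one ⟨Nat.floor_le hx.le, (Nat.lt_floor_add_one x).le⟩

theorem eps3_deriv_bound_general (x : ℝ) (hx : 0 < x) (hxi : ∀ n : ℤ, x ≠ n) :
    |x * (harmonicSum x - log x - γ
        + (γ - 1) * ((2 * Int.fract x - 1) * x - Int.fract x ^ 2 + Int.fract x) / x ^ 2)| ≤ 1 ∧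
      DifferentiableAt ℝ eps3 x ∧ |x * deriv eps3 x| ≤ 1 := by
  have hderiv := hasDerivAt_eps3 hx (hxi ⌊x⌋)
  have hbound := abs_mul_eps3Deriv_le_one hx
  exact ⟨hbound, hderiv.differentiableAt, hderiv.deriv.symm ▸ hbound⟩

end

/-- For every non-integer real `x ≥ 1`,
`|x (H(x) - log x - γ + (γ-1)((2{x}-1)x - {x}² + {x})/x²)| ≤ 1`;
equivalently, `ε₃` is differentiable at `x` and `|x ε₃'(x)| ≤ 1`. -/
theorem eps3_deriv_bound (x : ℝ) (hx : 1 ≤ x) (hxi : ∀ n : ℤ, x ≠ n) :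
    |x * (harmonicSum x - Real.log x - Real.eulerMascheroniConstant
        + (Real.eulerMascheroniConstant - 1)
          * ((2 * Int.fract x - 1) * x - Int.fract x ^ 2 + Int.fract x) / x ^ 2)| ≤ 1 ∧
      DifferentiableAt ℝ eps3 x ∧ |x * deriv eps3 x| ≤ 1 :=
  eps3_deriv_bound_general x (zero_lt_one.trans_le hx) hxi
end

section
/- For every real number x ≥ 1, one has | −1 + ∫_1^x m(t)/t dt | ≤ 1/x + (1/x) ∫_1^x |M(t)|/t dt. -/
/-- `M(x) = ∑_{n ≤ x} μ(n)`. -/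
noncomputable def Mobius_M (x : ℝ) : ℝ :=
  ∑ n ∈ Finset.Icc 1 ⌊x⌋₊, (ArithmeticFunction.moebius n : ℝ)

/-- `m(x) = ∑_{n ≤ x} μ(n)/n`. -/
noncomputable def Mobius_m (x : ℝ) : ℝ :=
  ∑ n ∈ Finset.Icc 1 ⌊x⌋₊, (ArithmeticFunction.moebius n : ℝ) / n

/-!
By partial summation `x ∫_1^x m(t)/t dt = ∑_{n ≤ x} μ(n) E₀(x/n)` with `E₀(y) = y log y`. Let
`h(y) = y - (2γ - 1) - 2(1 - γ)/y`, which differs from `y` by at most `1` for `y ≥ 1`. Then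
`y log y = ∑_{k ≤ y} h(y/k) + ∫_1^y F(u)/u du`, where, because the harmonic numbers satisfy
`1/(2n) - 1/(12n²) ≤ H_n - log n - γ ≤ 1/(2n)`, the kernel `F` is bounded by `1`. Möbius inversion
turns the sums of `h` into the single term `h(x)`, and the remaining terms, after `u = x/t`, add up
to `∫_1^x M(t) F(x/t)/t dt`.
-/

open ArithmeticFunction.Moebius ArithmeticFunction.zeta
open Filter Finset MeasureTheory Real Topology

local notation "γ" => eulerMascheroniConstant

section HarmonicNumbers

theorem log_add_one_sub_log_le {t : ℝ} (ht : 0 < t) :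
    log (t + 1) - log t ≤ (1 / t + 1 / (t + 1)) / 2 := by
  have one_le : 1 ≤ (t + 1) / t := by rw [one_le_div ht]; linarith
  calc log (t + 1) - log t = log ((t + 1) / t) := (log_div (by positivity) ht.ne').symm
    _ ≤ sinh (log ((t + 1) / t)) := self_le_sinh_iff.2 (log_nonneg one_le)
    _ = (1 / t + 1 / (t + 1)) / 2 := by
      rw [sinh_log (by positivity)]
      field_simp
      ring

theorem le_log_add_one_sub_log {t : ℝ} (ht : 0 < t) :
    (1 / t + 1 / (t + 1)) / 2 - (1 / t ^ 2 - 1 / (t + 1) ^ 2) / 12 ≤ log (t + 1) - log t := by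
  -- The first two terms of the series of `2 artanh (1 / (2 * t + 1))`.
  have series_le : 2 / (2 * t + 1) + 2 / 3 / (2 * t + 1) ^ 3 ≤ log (1 + t⁻¹) := by
    refine le_trans (le_of_eq ?_) (sum_le_hasSum (range 2) (fun k _ ↦ by positivity)
      (hasSum_log_one_add_inv ht))
    norm_num [sum_range_succ]
    ring
  have log_eq : log (1 + t⁻¹) = log (t + 1) - log t := by
    rw [← log_div (by positivity) ht.ne', add_div, div_self ht.ne', one_div]
  refine le_trans ?_ (series_le.trans_eq log_eq)
  rw [← sub_nonneg]
  field_simp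
  ring_nf
  positivity

theorem tendsto_harmonic_succ_sub_log :
    Tendsto (fun n : ℕ ↦ (harmonic (n + 1) : ℝ) - log (n + 1)) atTop (𝓝 γ) := by
  simpa using (tendsto_add_atTop_iff_nat 1).2 tendsto_harmonic_sub_log

theorem harmonic_sub_log_sub_eulerMascheroniConstant_le {n : ℕ} (hn : n ≠ 0) :
    (harmonic n : ℝ) - log n - γ ≤ 1 / (2 * n) := by
  obtain ⟨n, rfl⟩ := Nat.exists_eq_succ_of_ne_zero hn
  have mono : Monotone fun n : ℕ ↦
      (harmonic (n + 1) : ℝ) - log (n + 1) - 1 / 2 * (1 / ((n : ℝ) + 1)) := by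
    refine monotone_nat_of_le_succ fun n ↦ ?_
    have := log_add_one_sub_log_le (t := n + 1) (by positivity)
    rw [harmonic_succ (n + 1)]
    push_cast
    rw [inv_eq_one_div]
    linarith
  have lim := tendsto_harmonic_succ_sub_log.sub
    (tendsto_one_div_add_atTop_nhds_zero_nat.const_mul (1 / 2))
  have := mono.ge_of_tendsto lim n
  have : 1 / (2 * ((n : ℝ) + 1)) = 1 / 2 * (1 / ((n : ℝ) + 1)) := by field_simp
  push_cast
  linarith

theorem le_harmonic_sub_log_sub_eulerMascheroniConstant {n : ℕ} (hn : n ≠ 0) :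
    1 / (2 * n) - 1 / (12 * n ^ 2) ≤ (harmonic n : ℝ) - log n - γ := by
  obtain ⟨n, rfl⟩ := Nat.exists_eq_succ_of_ne_zero hn
  have anti : Antitone fun n : ℕ ↦ (harmonic (n + 1) : ℝ) - log (n + 1)
      - 1 / 2 * (1 / ((n : ℝ) + 1)) + 1 / 12 * (1 / ((n : ℝ) + 1)) ^ 2 := by
    refine antitone_nat_of_succ_le fun n ↦ ?_
    have := le_log_add_one_sub_log (t := n + 1) (by positivity)
    rw [harmonic_succ (n + 1)]
    push_cast
    rw [inv_eq_one_div]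
    simp only [one_div_pow]
    linarith
  have lim := (tendsto_harmonic_succ_sub_log.sub
    (tendsto_one_div_add_atTop_nhds_zero_nat.const_mul (1 / 2))).add
    ((tendsto_one_div_add_atTop_nhds_zero_nat.pow 2).const_mul (1 / 12))
  have := anti.le_of_tendsto lim n
  have : 1 / (2 * ((n : ℝ) + 1)) = 1 / 2 * (1 / ((n : ℝ) + 1)) := by field_simp
  have : 1 / (12 * ((n : ℝ) + 1) ^ 2) = 1 / 12 * (1 / ((n : ℝ) + 1)) ^ 2 := by field_simp
  push_cast
  linarith

theorem eulerMascheroniConstant_gt_d2 : 0.55 < γ := by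
  have := harmonic_sub_log_sub_eulerMascheroniConstant_le two_ne_zero
  norm_num [harmonic, sum_range_succ] at this ⊢
  linarith [log_two_lt_d9]

theorem mul_harmonic_sub_log_sub_eulerMascheroniConstant_le (n : ℕ) :
    n * ((harmonic n : ℝ) - log n - γ) ≤ γ := by
  rcases eq_or_ne n 0 with rfl | hn
  · simpa using (one_half_pos.trans one_half_lt_eulerMascheroniConstant).le
  calc n * ((harmonic n : ℝ) - log n - γ) ≤ n * (1 / (2 * n)) :=
        mul_le_mul_of_nonneg_left (harmonic_sub_log_sub_eulerMascheroniConstant_le hn) n.cast_nonneg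
    _ = 1 / 2 := by field_simp
    _ ≤ γ := one_half_lt_eulerMascheroniConstant.le

theorem le_mul_harmonic_sub_log_sub_eulerMascheroniConstant {n : ℕ} (hn : n ≠ 0) :
    1 - γ ≤ n * ((harmonic n : ℝ) - log n - γ) := by
  rcases eq_or_ne n 1 with rfl | hn_one
  · simp
  have two_le : (2 : ℝ) ≤ n := mod_cast (by omega : 2 ≤ n)
  calc 1 - γ ≤ 1 / 2 - 1 / (12 * 2) := by linarith [eulerMascheroniConstant_gt_d2]
    _ ≤ 1 / 2 - 1 / (12 * n) := by gcongr
    _ = n * (1 / (2 * n) - 1 / (12 * n ^ 2)) := by field_simp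
    _ ≤ n * ((harmonic n : ℝ) - log n - γ) :=
      mul_le_mul_of_nonneg_left (le_harmonic_sub_log_sub_eulerMascheroniConstant hn) n.cast_nonneg

end HarmonicNumbers

section MoebiusInversion

theorem sum_Icc_sum_Icc_div {M : Type*} [AddCommMonoid M] (f : ℕ → ℕ → M) (N : ℕ) :
    ∑ n ∈ Finset.Icc 1 N, ∑ k ∈ Finset.Icc 1 (N / n), f n k =
      ∑ m ∈ Finset.Icc 1 N, ∑ p ∈ m.divisorsAntidiagonal, f p.1 p.2 := by
  rw [sum_sigma', sum_sigma']
  refine sum_bij' (fun p _ ↦ ⟨p.1 * p.2, p.1, p.2⟩) (fun q _ ↦ ⟨q.2.1, q.2.2⟩) ?_ ?_ ?_ ?_ ?_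
  · rintro ⟨n, k⟩ h
    simp only [Finset.mem_sigma, Finset.mem_Icc, Nat.mem_divisorsAntidiagonal] at h ⊢
    have pos : 0 < n * k := Nat.mul_pos h.1.1 h.2.1
    exact ⟨⟨pos, (Nat.mul_le_mul_left n h.2.2).trans (Nat.mul_div_le N n)⟩, trivial, pos.ne'⟩
  · rintro ⟨m, n, k⟩ h
    simp only [Finset.mem_sigma, Finset.mem_Icc, Nat.mem_divisorsAntidiagonal] at h ⊢
    obtain ⟨⟨-, le⟩, rfl, ne⟩ := h
    have n_pos : 0 < n := Nat.pos_of_ne_zero (left_ne_zero_of_mul ne)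
    have k_pos : 0 < k := Nat.pos_of_ne_zero (right_ne_zero_of_mul ne)
    exact ⟨⟨n_pos, (Nat.le_mul_of_pos_right n k_pos).trans le⟩, k_pos,
      (Nat.le_div_iff_mul_le n_pos).2 (by rwa [mul_comm])⟩
  · simp
  · rintro ⟨m, n, k⟩ h
    simp only [Finset.mem_sigma, Nat.mem_divisorsAntidiagonal] at h
    obtain ⟨-, rfl, -⟩ := h
    rfl
  · simp

theorem sum_moebius_mul_sum_mul {R : Type*} [Ring R] (g : ℕ → R) {N : ℕ} (hN : N ≠ 0) :
    ∑ n ∈ Finset.Icc 1 N, (μ n : R) * ∑ k ∈ Finset.Icc 1 (N / n), g (n * k) = g 1 := by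
  have inner (m : ℕ) : ∑ p ∈ m.divisorsAntidiagonal, (μ p.1 : R) * g (p.1 * p.2) =
      if m = 1 then g m else 0 := by
    calc ∑ p ∈ m.divisorsAntidiagonal, (μ p.1 : R) * g (p.1 * p.2)
      _ = (∑ p ∈ m.divisorsAntidiagonal, (μ p.1 : R)) * g m := by
        rw [sum_mul]
        exact sum_congr rfl fun p hp ↦ by rw [(Nat.mem_divisorsAntidiagonal.1 hp).1]
      _ = ((μ * ζ : ArithmeticFunction R) m) * g m := by
        rw [ArithmeticFunction.coe_mul_zeta_apply, Nat.sum_divisorsAntidiagonal fun n _ ↦ (μ n : R)]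
        rfl
      _ = if m = 1 then g m else 0 := by
        rw [ArithmeticFunction.coe_moebius_mul_coe_zeta, ArithmeticFunction.one_apply, ite_mul,
          one_mul, zero_mul]
  simp_rw [mul_sum]
  rw [sum_Icc_sum_Icc_div fun n k ↦ (μ n : R) * g (n * k)]
  simp_rw [inner]
  rw [sum_ite_eq', if_pos (by simpa [Nat.one_le_iff_ne_zero] using hN)]

end MoebiusInversion

/-- The summatory function `t ↦ ∑_{1 ≤ n ≤ t} a n`; in particular `a 0` is ignored. -/
noncomputable def summatory (a : ℕ → ℝ) (t : ℝ) : ℝ :=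
  ∑ n ∈ Finset.Icc 1 ⌊t⌋₊, a n

section Summatory

variable {φ : ℝ → ℝ} {x : ℝ}

theorem summatory_congr {a b : ℕ → ℝ} (h : ∀ n : ℕ, (1 : ℝ) ≤ n → n ≤ x → a n = b n) :
    summatory a x = summatory b x := by
  refine sum_congr rfl fun n hn ↦ ?_
  obtain ⟨one_le, le⟩ := Finset.mem_Icc.1 hn
  exact h n (mod_cast one_le) ((Nat.le_floor_iff' (by omega)).1 le)

theorem summatory_add (a b : ℕ → ℝ) (x : ℝ) :
    summatory a x + summatory b x = summatory (fun n ↦ a n + b n) x :=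
  sum_add_distrib.symm

theorem mul_summatory (c : ℝ) (a : ℕ → ℝ) (x : ℝ) :
    c * summatory a x = summatory (fun n ↦ c * a n) x :=
  mul_sum ..

theorem summatory_cast (x : ℝ) : summatory (fun k ↦ (k : ℝ)) x = ⌊x⌋₊ * (⌊x⌋₊ + 1) / 2 := by
  have gauss (N : ℕ) : ∑ k ∈ Finset.Icc 1 N, (k : ℝ) = N * (N + 1) / 2 := by
    induction N with
    | zero => simp
    | succ N ih =>
      rw [sum_Icc_succ_top (by omega), ih]
      push_cast
      ring
  exact gauss _

theorem summatory_inv (x : ℝ) : summatory (fun k ↦ (k : ℝ)⁻¹) x = harmonic ⌊x⌋₊ := by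
  simp [summatory, harmonic_eq_sum_Icc]

theorem sum_moebius_mul_summatory_div (h : ℝ → ℝ) (hx : 1 ≤ x) :
    summatory (fun n ↦ μ n * summatory (fun k ↦ h (x / n / k)) (x / n)) x = h x := by
  have := sum_moebius_mul_sum_mul (fun m ↦ h (x / m)) (Nat.floor_pos.2 hx).ne'
  simpa only [summatory, Nat.floor_div_natCast, div_div, ← Nat.cast_mul, Nat.cast_one, div_one]
    using this

theorem summatory_mul_eq_sum_indicator (a : ℕ → ℝ) (φ : ℝ → ℝ) {t : ℝ} (ht : t ≤ x) :
    summatory a t * φ t =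
      ∑ n ∈ Finset.Icc 1 ⌊x⌋₊, a n * (Set.Ici (n : ℝ)).indicator φ t := by
  have Icc_eq : Finset.Icc 1 ⌊t⌋₊ = {n ∈ Finset.Icc 1 ⌊x⌋₊ | ((n : ℕ) : ℝ) ≤ t} := by
    ext n
    simp only [Finset.mem_filter, Finset.mem_Icc, and_assoc, and_congr_right_iff]
    intro one_le
    rw [Nat.le_floor_iff' (by omega), Nat.le_floor_iff' (by omega)]
    exact ⟨fun le ↦ ⟨le.trans ht, le⟩, And.right⟩
  rw [summatory, Icc_eq, sum_filter, sum_mul]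
  refine sum_congr rfl fun n _ ↦ ?_
  simp only [Set.indicator_apply, Set.mem_Ici, ite_mul, mul_ite, zero_mul, mul_zero]

theorem intervalIntegrable_summatory_mul (a : ℕ → ℝ) (hx : 1 ≤ x)
    (hφ : IntervalIntegrable φ volume 1 x) :
    IntervalIntegrable (fun t ↦ summatory a t * φ t) volume 1 x := by
  rw [intervalIntegrable_iff_integrableOn_Ioc_of_le hx] at hφ ⊢
  refine IntegrableOn.congr_fun ?_
    (fun t ht ↦ (summatory_mul_eq_sum_indicator a φ ht.2).symm) measurableSet_Ioc
  exact integrable_finsetSum _ fun n _ ↦ (hφ.indicator measurableSet_Ici).const_mul _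

theorem setIntegral_Ioc_indicator_Ici {a b c : ℝ} (hab : a ≤ b) (hbc : b ≤ c) :
    ∫ t in Set.Ioc a c, (Set.Ici b).indicator φ t = ∫ t in b..c, φ t := by
  rw [setIntegral_indicator measurableSet_Ici, intervalIntegral.integral_of_le hbc]
  have Ioc_eq : Set.Ioc a c ∩ Set.Ioi b = Set.Ioc b c := by
    rw [Set.Ioc_inter_Ioi, sup_eq_right.2 hab]
  rw [← Ioc_eq]
  exact setIntegral_congr_set ((ae_eq_refl _).inter Ioi_ae_eq_Ici.symm)

theorem integral_summatory_mul (a : ℕ → ℝ) (hx : 1 ≤ x)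
    (hφ : IntervalIntegrable φ volume 1 x) :
    ∫ t in (1 : ℝ)..x, summatory a t * φ t = summatory (fun n ↦ a n * ∫ t in n..x, φ t) x := by
  rw [intervalIntegrable_iff_integrableOn_Ioc_of_le hx] at hφ
  rw [intervalIntegral.integral_of_le hx, setIntegral_congr_fun measurableSet_Ioc
    fun t ht ↦ summatory_mul_eq_sum_indicator a φ ht.2,
    integral_finsetSum _ fun n _ ↦ (hφ.indicator measurableSet_Ici).const_mul _]
  refine summatory_congr fun n one_le le ↦ ?_
  rw [integral_const_mul, setIntegral_Ioc_indicator_Ici one_le le]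

end Summatory

section Reciprocal

variable {a b c : ℝ} (φ : ℝ → ℝ)

theorem image_const_div_Icc_of_pos (hc : 0 < c) (ha : 0 < a) (hab : a ≤ b) :
    (c / ·) '' Set.Icc a b = Set.Icc (c / b) (c / a) := by
  have hb : 0 < b := ha.trans_le hab
  refine Set.Subset.antisymm ?_ fun u hu ↦ ?_
  · rintro _ ⟨t, ht, rfl⟩
    have t_pos : 0 < t := ha.trans_le ht.1
    exact ⟨div_le_div_of_nonneg_left hc.le t_pos ht.2, div_le_div_of_nonneg_left hc.le ha ht.1⟩
  · have u_pos : 0 < u := (div_pos hc hb).trans_le hu.1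
    exact ⟨c / u, ⟨(le_div_comm₀ u_pos ha).1 hu.2, (div_le_comm₀ hb u_pos).1 hu.1⟩,
      div_div_cancel₀ hc.ne'⟩

theorem hasDerivAt_const_div {t : ℝ} (c : ℝ) (ht : t ≠ 0) :
    HasDerivAt (c / ·) (-(c / t ^ 2)) t := by
  simpa [div_eq_mul_inv] using (hasDerivAt_inv ht).const_mul c

theorem injective_const_div (hc : c ≠ 0) : Function.Injective (c / · : ℝ → ℝ) :=
  fun _ _ h ↦ inv_injective (mul_left_cancel₀ hc (by simpa only [div_eq_mul_inv] using h))

theorem abs_deriv_const_div_smul {t : ℝ} (hc : 0 < c) (ht : 0 < t) :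
    |-(c / t ^ 2)| • (φ (c / t) / (c / t)) = φ (c / t) / t := by
  rw [abs_neg, abs_of_pos (by positivity), smul_eq_mul]
  field_simp

theorem integral_comp_const_div_div (hc : 0 < c) (ha : 0 < a) (hab : a ≤ b) :
    ∫ t in a..b, φ (c / t) / t = ∫ u in c / b..c / a, φ u / u := by
  have pos {t : ℝ} (ht : t ∈ Set.Icc a b) : 0 < t := ha.trans_le ht.1
  rw [intervalIntegral.integral_of_le hab, intervalIntegral.integral_of_le (by gcongr),
    ← integral_Icc_eq_integral_Ioc, ← integral_Icc_eq_integral_Ioc,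
    ← image_const_div_Icc_of_pos hc ha hab, integral_image_eq_integral_abs_deriv_smul
      measurableSet_Icc (fun t ht ↦ (hasDerivAt_const_div c (pos ht).ne').hasDerivWithinAt)
      (injective_const_div hc.ne').injOn]
  exact setIntegral_congr_fun measurableSet_Icc
    fun t ht ↦ (abs_deriv_const_div_smul φ hc (pos ht)).symm

theorem intervalIntegrable_comp_const_div_div (hc : 0 < c) (ha : 0 < a) (hab : a ≤ b)
    (hφ : IntervalIntegrable (fun u ↦ φ u / u) volume (c / b) (c / a)) :
    IntervalIntegrable (fun t ↦ φ (c / t) / t) volume a b := by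
  have pos {t : ℝ} (ht : t ∈ Set.Icc a b) : 0 < t := ha.trans_le ht.1
  rw [intervalIntegrable_iff_integrableOn_Icc_of_le (by gcongr),
    ← image_const_div_Icc_of_pos hc ha hab, integrableOn_image_iff_integrableOn_abs_deriv_smul
      measurableSet_Icc (fun t ht ↦ (hasDerivAt_const_div c (pos ht).ne').hasDerivWithinAt)
      (injective_const_div hc.ne').injOn] at hφ
  rw [intervalIntegrable_iff_integrableOn_Icc_of_le hab]
  exact hφ.congr_fun (fun t ht ↦ abs_deriv_const_div_smul φ hc (pos ht)) measurableSet_Icc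

end Reciprocal

/-- The function `h(y) = y - (2γ - 1) - 2(1 - γ)/y`, an approximation of `y` whose dilates
`y ↦ h(y/k)`, `k ≤ y`, add up to an approximation of `y log y`. It is chosen to vanish at `1`, so
that this sum is continuous in `y`, and the constant is the one that makes `errorKernel`
bounded. -/
noncomputable def approxId (y : ℝ) : ℝ :=
  y - (2 * γ - 1) - 2 * (1 - γ) / y

/-- The function `F` for which `F(y)/y` is, off the integers, the derivative of
`y log y - ∑_{k ≤ y} approxId (y/k)`. -/
noncomputable def errorKernel (y : ℝ) : ℝ :=
  y * (log y + 1 - summatory (fun k ↦ (k : ℝ)⁻¹) y)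
    - 2 * (1 - γ) * summatory (fun k ↦ (k : ℝ)) y / y

section ErrorKernel

variable {y : ℝ}

theorem abs_approxId_sub_self_le (hy : 1 ≤ y) : |approxId y - y| ≤ 1 := by
  have γ_gt := one_half_lt_eulerMascheroniConstant
  have γ_lt := eulerMascheroniConstant_lt_two_thirds
  have nonneg : 0 ≤ 2 * (1 - γ) / y := div_nonneg (by linarith) (by linarith)
  have le : 2 * (1 - γ) / y ≤ 2 * (1 - γ) := div_le_self (by linarith) hy
  rw [approxId, abs_le]
  constructor <;> linarith

theorem errorKernel_eq (y : ℝ) : errorKernel y =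
    y * (log y + 1 - harmonic ⌊y⌋₊) - (1 - γ) * (⌊y⌋₊ * (⌊y⌋₊ + 1)) / y := by
  rw [errorKernel, summatory_inv, summatory_cast]
  ring

theorem neg_one_le_errorKernel (hy : 1 ≤ y) : -1 ≤ errorKernel y := by
  have y_pos : 0 < y := by linarith
  have floor_pos : 0 < ⌊y⌋₊ := Nat.floor_pos.2 hy
  have floor_le : (⌊y⌋₊ : ℝ) ≤ y := Nat.floor_le y_pos.le
  rw [errorKernel_eq]
  generalize ⌊y⌋₊ = n at *
  have n_pos : (0 : ℝ) < n := mod_cast floor_pos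
  have γ_lt := eulerMascheroniConstant_lt_two_thirds
  have harmonic_le := harmonic_le_one_add_log n
  have first_ge : n * (log n + 1 - harmonic n) ≤ y * (log y + 1 - harmonic n) := by
    gcongr
    linarith
  have second_le : (1 - γ) * (n * (n + 1)) / y ≤ (1 - γ) * (n + 1) := by
    rw [div_le_iff₀ y_pos, mul_comm (n : ℝ), ← mul_assoc]
    exact mul_le_mul_of_nonneg_left floor_le (mul_nonneg (by linarith) (by linarith))
  linarith [mul_harmonic_sub_log_sub_eulerMascheroniConstant_le n]

theorem errorKernel_le_one (hy : 1 ≤ y) : errorKernel y ≤ 1 := by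
  have y_pos : 0 < y := by linarith
  have floor_le : (⌊y⌋₊ : ℝ) ≤ y := Nat.floor_le y_pos.le
  have lt_floor : y < ⌊y⌋₊ + 1 := Nat.lt_floor_add_one y
  have harmonic_le := harmonic_floor_le_one_add_log y hy
  rw [errorKernel_eq]
  generalize ⌊y⌋₊ = n at *
  have γ_lt := eulerMascheroniConstant_lt_two_thirds
  have le_log : log y ≤ log (n + 1) := log_le_log y_pos lt_floor.le
  have first_le : y * (log y + 1 - harmonic n) ≤ (n + 1) * (log (n + 1) + 1 - harmonic n) := by
    gcongr
    linarith
  have second_ge : (1 - γ) * n ≤ (1 - γ) * (n * (n + 1)) / y := by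
    rw [le_div_iff₀ y_pos, ← mul_assoc]
    exact mul_le_mul_of_nonneg_left lt_floor.le (mul_nonneg (by linarith) n.cast_nonneg)
  have harmonic_ge := le_mul_harmonic_sub_log_sub_eulerMascheroniConstant n.succ_ne_zero
  rw [harmonic_succ] at harmonic_ge
  push_cast at harmonic_ge
  have : (n + 1 : ℝ) * ((n : ℝ) + 1)⁻¹ = 1 := mul_inv_cancel₀ (by positivity)
  linarith

theorem abs_errorKernel_le_one (hy : 1 ≤ y) : |errorKernel y| ≤ 1 :=
  abs_le.2 ⟨neg_one_le_errorKernel hy, errorKernel_le_one hy⟩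

theorem errorKernel_div_eq (hy : y ≠ 0) : errorKernel y / y =
    log y + 1 - summatory (fun k ↦ (k : ℝ)⁻¹) y * 1
      - summatory (fun k ↦ (k : ℝ)) y * (2 * (1 - γ) * y ^ (-2 : ℤ)) := by
  rw [errorKernel, zpow_neg]
  norm_cast
  field_simp

theorem integral_zpow_neg_two {a b : ℝ} (ha : 0 < a) (hb : 0 < b) :
    ∫ u in a..b, u ^ (-2 : ℤ) = 1 / a - 1 / b := by
  rw [integral_zpow (Or.inr ⟨by norm_num, Set.notMem_uIcc_of_lt ha hb⟩)]
  norm_num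
  ring

theorem intervalIntegrable_log_add_one : IntervalIntegrable (fun u ↦ log u + 1) volume 1 y :=
  intervalIntegral.intervalIntegrable_log'.add intervalIntegrable_const

theorem intervalIntegrable_zpow_neg_two (hy : 1 ≤ y) (c : ℝ) :
    IntervalIntegrable (fun u : ℝ ↦ c * u ^ (-2 : ℤ)) volume 1 y :=
  (intervalIntegral.intervalIntegrable_zpow
    (Or.inr (Set.notMem_uIcc_of_lt one_pos (by linarith)))).const_mul c

theorem errorKernel_div_eqOn (hy : 1 ≤ y) : Set.EqOn (fun u ↦ errorKernel u / u)
    (fun u ↦ log u + 1 - summatory (fun k ↦ (k : ℝ)⁻¹) u * 1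
      - summatory (fun k ↦ (k : ℝ)) u * (2 * (1 - γ) * u ^ (-2 : ℤ))) (Set.uIcc 1 y) :=
  fun u hu ↦ errorKernel_div_eq (by rw [Set.uIcc_of_le hy] at hu; linarith [hu.1])

theorem intervalIntegrable_errorKernel_div (hy : 1 ≤ y) :
    IntervalIntegrable (fun u ↦ errorKernel u / u) volume 1 y :=
  ((intervalIntegrable_log_add_one.sub
    (intervalIntegrable_summatory_mul _ hy intervalIntegrable_const)).sub
    (intervalIntegrable_summatory_mul _ hy (intervalIntegrable_zpow_neg_two hy _))).congr
    ((errorKernel_div_eqOn hy).mono Set.uIoc_subset_uIcc).symm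

theorem integral_errorKernel_div (hy : 1 ≤ y) :
    ∫ u in (1 : ℝ)..y, errorKernel u / u = y * log y - summatory (fun k ↦ approxId (y / k)) y := by
  have log_part : ∫ u in (1 : ℝ)..y, (log u + 1) = y * log y := by
    rw [intervalIntegral.integral_add intervalIntegral.intervalIntegrable_log'
      intervalIntegrable_const, integral_log]
    simp
  have approxId_part : summatory (fun k ↦ (k : ℝ)⁻¹ * ∫ _ in k..y, 1) y
      + summatory (fun k ↦ k * ∫ u in k..y, 2 * (1 - γ) * u ^ (-2 : ℤ)) y
      = summatory (fun k ↦ approxId (y / k)) y := by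
    rw [summatory_add]
    refine summatory_congr fun k one_le _ ↦ ?_
    have k_pos : (0 : ℝ) < k := by linarith
    rw [intervalIntegral.integral_const, intervalIntegral.integral_const_mul,
      integral_zpow_neg_two k_pos (by linarith), approxId, smul_eq_mul]
    field_simp
    ring
  have int_inv := intervalIntegrable_summatory_mul (fun k ↦ (k : ℝ)⁻¹) hy
    (intervalIntegrable_const (c := (1 : ℝ)))
  have int_cast := intervalIntegrable_summatory_mul (fun k ↦ (k : ℝ)) hy
    (intervalIntegrable_zpow_neg_two hy (2 * (1 - γ)))
  rw [intervalIntegral.integral_congr (errorKernel_div_eqOn hy),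
    intervalIntegral.integral_sub (intervalIntegrable_log_add_one.sub int_inv) int_cast,
    intervalIntegral.integral_sub intervalIntegrable_log_add_one int_inv, log_part,
    integral_summatory_mul _ hy intervalIntegrable_const,
    integral_summatory_mul _ hy (intervalIntegrable_zpow_neg_two hy _), ← approxId_part]
  ring

end ErrorKernel

section MoebiusSums

variable {x : ℝ}

theorem intervalIntegrable_inv_of_one_le (hx : 1 ≤ x) :
    IntervalIntegrable (fun t : ℝ ↦ t⁻¹) volume 1 x :=
  intervalIntegrable_inv_iff.2 (Or.inr (Set.notMem_uIcc_of_lt one_pos (by linarith)))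

theorem integral_Mobius_m_div (hx : 1 ≤ x) :
    ∫ t in (1 : ℝ)..x, Mobius_m t / t = summatory (fun n ↦ (μ n : ℝ) / n * log (x / n)) x := by
  simp_rw [div_eq_mul_inv (Mobius_m _)]
  refine (integral_summatory_mul (fun n ↦ (μ n : ℝ) / n) hx
    (intervalIntegrable_inv_of_one_le hx)).trans (summatory_congr fun n _ _ ↦ ?_)
  rw [integral_inv_of_pos (by linarith) (by linarith)]

theorem intervalIntegrable_abs_Mobius_M_div (hx : 1 ≤ x) :
    IntervalIntegrable (fun t ↦ |Mobius_M t| / t) volume 1 x := by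
  refine (intervalIntegrable_summatory_mul (fun n ↦ (μ n : ℝ)) hx
    (intervalIntegrable_inv_of_one_le hx)).abs.congr fun t ht ↦ ?_
  rw [Set.uIoc_of_le hx] at ht
  have t_pos : 0 < t := by linarith [ht.1]
  rw [abs_mul, abs_of_pos (inv_pos.2 t_pos), div_eq_mul_inv]
  rfl

theorem integral_Mobius_M_mul_errorKernel (hx : 1 ≤ x) :
    ∫ t in (1 : ℝ)..x, Mobius_M t * (errorKernel (x / t) / t) =
      summatory (fun n ↦ μ n * ∫ u in (1 : ℝ)..(x / n), errorKernel u / u) x := by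
  have x_pos : 0 < x := by linarith
  have integrable : IntervalIntegrable (fun t ↦ errorKernel (x / t) / t) volume 1 x :=
    intervalIntegrable_comp_const_div_div errorKernel x_pos one_pos hx
      (by simpa [x_pos.ne'] using intervalIntegrable_errorKernel_div hx)
  refine (integral_summatory_mul (fun n ↦ (μ n : ℝ)) hx integrable).trans
    (summatory_congr fun n one_le le ↦ ?_)
  rw [integral_comp_const_div_div errorKernel x_pos (by linarith) le, div_self x_pos.ne']

theorem mul_integral_Mobius_m_div (hx : 1 ≤ x) :
    x * ∫ t in (1 : ℝ)..x, Mobius_m t / t =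
      approxId x + ∫ t in (1 : ℝ)..x, Mobius_M t * (errorKernel (x / t) / t) := by
  rw [integral_Mobius_m_div hx, integral_Mobius_M_mul_errorKernel hx,
    ← sum_moebius_mul_summatory_div approxId hx, mul_summatory, summatory_add]
  refine summatory_congr fun n one_le le ↦ ?_
  rw [integral_errorKernel_div ((one_le_div (by linarith)).2 le)]
  ring

theorem abs_integral_Mobius_M_mul_errorKernel_le (hx : 1 ≤ x) :
    |∫ t in (1 : ℝ)..x, Mobius_M t * (errorKernel (x / t) / t)| ≤
      ∫ t in (1 : ℝ)..x, |Mobius_M t| / t := by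
  rw [← norm_eq_abs]
  refine intervalIntegral.norm_integral_le_of_norm_le hx (.of_forall fun t ht ↦ ?_)
    (intervalIntegrable_abs_Mobius_M_div hx)
  have t_pos : 0 < t := by linarith [ht.1]
  calc ‖Mobius_M t * (errorKernel (x / t) / t)‖
    _ = |Mobius_M t| * |errorKernel (x / t)| / t := by
      rw [norm_eq_abs, abs_mul, abs_div, abs_of_pos t_pos, mul_div_assoc]
    _ ≤ |Mobius_M t| * 1 / t := by
      gcongr
      exact abs_errorKernel_le_one ((one_le_div t_pos).2 ht.2)
    _ = |Mobius_M t| / t := by rw [mul_one]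

end MoebiusSums

/-- For every real `x ≥ 1`,
`|-1 + ∫_1^x m(t)/t dt| ≤ 1/x + (1/x) ∫_1^x |M(t)|/t dt`. -/
theorem integral_m_bound (x : ℝ) (hx : 1 ≤ x) :
    |(-1 : ℝ) + ∫ t in (1 : ℝ)..x, Mobius_m t / t|
      ≤ 1 / x + (1 / x) * ∫ t in (1 : ℝ)..x, |Mobius_M t| / t := by
  have x_pos : 0 < x := by linarith
  have main_eq := mul_integral_Mobius_m_div hx
  set J := ∫ t in (1 : ℝ)..x, Mobius_M t * (errorKernel (x / t) / t)
  calc |(-1 : ℝ) + ∫ t in (1 : ℝ)..x, Mobius_m t / t|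
    _ = |(1 / x) * ((approxId x - x) + J)| := by
      rw [sub_add_eq_add_sub, ← main_eq]
      field_simp
      ring_nf
    _ = (1 / x) * |(approxId x - x) + J| := by rw [abs_mul, abs_of_pos (one_div_pos.2 x_pos)]
    _ ≤ (1 / x) * (|approxId x - x| + |J|) := by gcongr; exact abs_add_le _ _
    _ ≤ (1 / x) * (1 + ∫ t in (1 : ℝ)..x, |Mobius_M t| / t) := by
      gcongr
      · exact abs_approxId_sub_self_le hx
      · exact abs_integral_Mobius_M_mul_errorKernel_le hx
    _ = 1 / x + (1 / x) * ∫ t in (1 : ℝ)..x, |Mobius_M t| / t := by ring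
end

section
/- Let α > 0 be a real number such that α^{−1} is an integer ≥ 2. Then the map from {0, 1} × ℕ × {k ∈ ℕ : 2 ≤ k ≤ α^{−1}} to the positive integers given by (h, j, k) ↦ ⌊α^{−4−2j}/k⌋ + h is injective. -/
/-!
Put `x = α⁻¹ ≥ 2`. Distinct pairs `(j, k)` with `1 ≤ k ≤ x` give values `x ^ (4 + 2 * j) / k` that
are at least `8` apart, so their integer parts differ by at least `8` as well, and adding an
`h ≤ 7` cannot make them meet. For equal `j` the gap is at least `x ^ 4 / (k * k')` with
`k * k' ≤ (x - 1) * x`; for `j < j'` the factor `x ^ 2 / k' ≥ x` wins. The gap `8` is attained at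
`x = 2`, by `2 ^ 4 / 1` and `2 ^ 4 / 2`.
-/

section Separation

variable {K : Type*} [Field K] [LinearOrder K] [IsStrictOrderedRing K] {x : K}

lemma eight_mul_sub_one_mul_self_le_pow_four (hx : 2 ≤ x) : 8 * ((x - 1) * x) ≤ x ^ 4 := by
  have hquad : 0 ≤ x ^ 2 + 2 * x - 4 := by nlinarith
  have hprod : 0 ≤ x * ((x - 2) * (x ^ 2 + 2 * x - 4)) :=
    mul_nonneg (by linarith) (mul_nonneg (by linarith) hquad)
  linarith

lemma pow_div_add_eight_le_pow_div_of_add_one_le (hx : 2 ≤ x) {n : ℕ} (hn : 4 ≤ n) {a b : K}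
    (ha : 0 < a) (hab : a + 1 ≤ b) (hb : b ≤ x) : x ^ n / b + 8 ≤ x ^ n / a := by
  have hb₀ : 0 < b := by linarith
  have hgap : 8 * (a * b) ≤ x ^ n * (b - a) :=
    calc 8 * (a * b) ≤ 8 * ((x - 1) * x) := by gcongr <;> linarith
      _ ≤ x ^ 4 := eight_mul_sub_one_mul_self_le_pow_four hx
      _ ≤ x ^ n := pow_le_pow_right₀ (by linarith) hn
      _ ≤ x ^ n * (b - a) := le_mul_of_one_le_right (by positivity) (by linarith)
  rw [div_add' _ _ _ hb₀.ne', div_le_div_iff₀ hb₀ ha]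
  linarith

lemma pow_div_add_eight_le_pow_div_of_add_two_le (hx : 2 ≤ x) {m n : ℕ} (hm : 3 ≤ m)
    (hmn : m + 2 ≤ n) {a b : K} (ha : 1 ≤ a) (hb₀ : 0 < b) (hb : b ≤ x) :
    x ^ m / a + 8 ≤ x ^ n / b := by
  have hx₁ : 1 ≤ x := by linarith
  have hpow : 8 ≤ x ^ m :=
    calc (8 : K) = 2 ^ 3 := by norm_num
      _ ≤ x ^ 3 := by gcongr
      _ ≤ x ^ m := pow_le_pow_right₀ hx₁ hm
  calc x ^ m / a + 8 ≤ x ^ m + x ^ m := by gcongr; exact div_le_self (by positivity) ha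
    _ = x ^ m * 2 := (mul_two _).symm
    _ ≤ x ^ m * x := by gcongr
    _ = x ^ (m + 2) / x := by rw [pow_add]; field_simp
    _ ≤ x ^ n / b := by gcongr

lemma eight_le_abs_pow_div_sub_pow_div (hx : 2 ≤ x) {j k j' k' : ℕ} (hk : 1 ≤ k)
    (hkx : (k : K) ≤ x) (hk' : 1 ≤ k') (hkx' : (k' : K) ≤ x) (hne : (j, k) ≠ (j', k')) :
    8 ≤ |x ^ (4 + 2 * j) / k - x ^ (4 + 2 * j') / k'| := by
  wlog hlt : j < j' ∨ j = j' ∧ k' < k generalizing j k j' k'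
  · rw [abs_sub_comm]
    exact this hk' hkx' hk hkx hne.symm (by grind)
  rw [abs_sub_comm]
  refine le_abs.2 (Or.inl (le_sub_iff_add_le'.2 ?_))
  rcases hlt with hj | ⟨rfl, hlt⟩
  · exact pow_div_add_eight_le_pow_div_of_add_two_le hx (by lia) (by lia) (by exact_mod_cast hk)
      (by exact_mod_cast hk') hkx'
  · exact pow_div_add_eight_le_pow_div_of_add_one_le hx (by lia) (by exact_mod_cast hk')
      (by exact_mod_cast hlt) hkx

end Separation

lemma le_abs_floor_sub_floor {R : Type*} [Ring R] [LinearOrder R] [IsStrictOrderedRing R]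
    [FloorRing R] {y z : R} {c : ℤ} (h : (c : R) ≤ |y - z|) : c ≤ |⌊y⌋ - ⌊z⌋| := by
  wlog hzy : z ≤ y generalizing y z
  · rw [abs_sub_comm]
    exact this (abs_sub_comm y z ▸ h) (le_of_not_ge hzy)
  rw [abs_of_nonneg (sub_nonneg.2 hzy), le_sub_iff_add_le'] at h
  refine le_abs.2 (Or.inl (le_sub_iff_add_le'.2 ?_))
  rw [← Int.floor_add_intCast]
  exact Int.floor_mono h

theorem floor_map_injective_general (α : ℝ) (hα : 2 ≤ α⁻¹) :
    ∀ h j k h' j' k' : ℕ,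
      h ≤ 7 → h' ≤ 7 →
      1 ≤ k → (k : ℝ) ≤ α⁻¹ → 1 ≤ k' → (k' : ℝ) ≤ α⁻¹ →
      ⌊α ^ (-4 - 2 * (j : ℤ)) / k⌋ + (h : ℤ) = ⌊α ^ (-4 - 2 * (j' : ℤ)) / k'⌋ + (h' : ℤ) →
      (h, j, k) = (h', j', k') := by
  intro h j k h' j' k' hh hh' hk hkα hk' hkα' heq
  have hpow (i : ℕ) : α ^ (-4 - 2 * (i : ℤ)) = α⁻¹ ^ (4 + 2 * i) := by
    rw [← zpow_natCast, inv_zpow']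
    congr 1
    push_cast
    ring
  rw [hpow, hpow] at heq
  have hjk : (j, k) = (j', k') := by
    by_contra hne
    have hgap := le_abs_floor_sub_floor (c := 8)
      (mod_cast eight_le_abs_pow_div_sub_pow_div hα hk hkα hk' hkα' hne)
    rcases le_abs.1 hgap with hgap | hgap <;> lia
  obtain ⟨rfl, rfl⟩ := Prod.mk.inj hjk
  obtain rfl : h = h' := by lia
  rfl

/-- Let `α > 0` with `α⁻¹` an integer `≥ 2`. Then the map
`(h, j, k) ↦ ⌊α^(-4-2j)/k⌋ + h`, defined on `{0,1} × ℕ × {k : 2 ≤ k ≤ α⁻¹}`,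
is injective. -/
theorem floor_map_injective (α : ℝ) (hα : 0 < α)
    (hint : ∃ m : ℤ, 2 ≤ m ∧ (m : ℝ) = α⁻¹) :
    ∀ h j k h' j' k' : ℕ,
      h ≤ 1 → h' ≤ 1 →
      2 ≤ k → (k : ℝ) ≤ α⁻¹ → 2 ≤ k' → (k' : ℝ) ≤ α⁻¹ →
      ⌊α ^ (-4 - 2 * (j : ℤ)) / k⌋ + (h : ℤ) = ⌊α ^ (-4 - 2 * (j' : ℤ)) / k'⌋ + (h' : ℤ) →
      (h, j, k) = (h', j', k') := by
  intro h j k h' j' k' hh hh' hk hkα hk' hkα'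
  exact floor_map_injective_general α (le_trans (by exact_mod_cast hk) hkα) h j k h' j' k'
    (by lia) (by lia) (by lia) hkα (by lia) hkα'
end

section
/- Let α > 0 be a real number such that α^{−1} is an integer ≥ 2, and let G_α(x) = ∑_{n ≤ x} |f_α(n)|, the sum over positive integers n ≤ x. Then for every real x > 0, G_α(x) ≤ (x + 1)(2/e + 3α). -/
open Classical

/-- The arithmetic function `f_α`: `f_α(n) = (-1)^h α ⌊α^(-4-2j)/k⌋` if
`n = ⌊α^(-4-2j)/k⌋ + h` with `j ≥ 0`, `h ∈ {0,1}`, `2 ≤ k ≤ α⁻¹` (such a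
representation, when it exists, is unique), and `f_α(n) = 0` otherwise.
Here a triple `t = (h, j, k)` is encoded as `t.1 = h`, `t.2.1 = j`, `t.2.2 = k`. -/
noncomputable def fAlpha (α : ℝ) (n : ℕ) : ℝ :=
  if h : ∃ t : ℕ × ℕ × ℕ, t.1 ≤ 1 ∧ 2 ≤ t.2.2 ∧ (t.2.2 : ℝ) ≤ α⁻¹ ∧
      (n : ℤ) = ⌊α ^ (-4 - 2 * (t.2.1 : ℤ)) / t.2.2⌋ + t.1 then
    (-1 : ℝ) ^ h.choose.1 * α * (⌊α ^ (-4 - 2 * (h.choose.2.1 : ℤ)) / h.choose.2.2⌋ : ℤ)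
  else 0

/-!
Write `β = α⁻¹`. Each `n` in the support of `f_α` is `⌊β ^ (4 + 2 * j) / k⌋ + h` for some
`(h, j, k)`, and then `|f_α n| ≤ α * β ^ (4 + 2 * j) / k`. If moreover `n ≤ x`, then
`β ^ (4 + 2 * j) < k * y` with `y = x + 1`, which leaves finitely many levels `j`. The sum of
`β ^ (4 + 2 * j) / k` over the `k` of one level is at most `β ^ (4 + 2 * j) * (β - 1) / 2`
trivially, and at most `y * (β / e + 1)` because it is a piece of the harmonic series and
`log u ≤ u / e`. With the second bound used only for the last nonempty level `J`, the earlier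
levels add up geometrically to at most `β ^ (3 + 2 * J) / 2 < y / 2`.
-/

open Finset

section OrderedSums

variable {ι κ M : Type*} [AddCommMonoid M] [PartialOrder M] [IsOrderedAddMonoid M]

lemma sum_le_sum_of_ne_zero_exists_le {s : Finset ι} {T : Finset κ} {f : ι → M} {w : κ → M}
    (g : κ → ι) (hw : ∀ t ∈ T, 0 ≤ w t)
    (h : ∀ i ∈ s, f i ≠ 0 → ∃ t ∈ T, g t = i ∧ f i ≤ w t) :
    ∑ i ∈ s, f i ≤ ∑ t ∈ T, w t := by
  have fiber_nonneg (i : ι) : 0 ≤ ∑ t ∈ T with g t = i, w t :=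
    sum_nonneg fun t ht ↦ hw t (mem_of_mem_filter t ht)
  calc ∑ i ∈ s, f i ≤ ∑ i ∈ s, ∑ t ∈ T with g t = i, w t := by
        refine sum_le_sum fun i hi ↦ ?_
        by_cases hfi : f i = 0
        · exact hfi ▸ fiber_nonneg i
        · obtain ⟨t, ht, hgt, hle⟩ := h i hi hfi
          exact hle.trans <| single_le_sum (fun t ht ↦ hw t (mem_of_mem_filter t ht))
            (mem_filter.2 ⟨ht, hgt⟩)
    _ ≤ ∑ t ∈ T, w t := sum_fiberwise_le_sum_of_sum_fiber_nonneg fun i _ ↦ fiber_nonneg i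

end OrderedSums

section HarmonicSums

lemma log_le_div_exp_one {u : ℝ} (hu : 0 < u) : Real.log u ≤ u / Real.exp 1 := by
  rw [le_div_iff₀' (Real.exp_pos 1)]
  simpa only [Real.exp_log hu] using Real.exp_one_mul_le_exp (x := Real.log u)

lemma one_div_succ_le_log_div {n : ℕ} (hn : 0 < n) :
    1 / ((n + 1 : ℕ) : ℝ) ≤ Real.log ((n + 1 : ℕ) / n) := by
  convert Real.one_sub_inv_le_log_of_pos (x := ((n + 1 : ℕ) : ℝ) / n) (by positivity) using 1
  field_simp
  push_cast
  ring

lemma sum_Ioc_one_div_le_log_div {m n : ℕ} (hm : 0 < m) (hmn : m ≤ n) :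
    ∑ k ∈ Ioc m n, 1 / (k : ℝ) ≤ Real.log (n / m) := by
  induction n, hmn using Nat.le_induction with
  | base => simp
  | succ n hmn ih =>
    have hn : 0 < n := hm.trans_le hmn
    calc ∑ k ∈ Ioc m (n + 1), 1 / (k : ℝ)
        = ∑ k ∈ Ioc m n, 1 / (k : ℝ) + 1 / ((n + 1 : ℕ) : ℝ) := sum_Ioc_succ_top hmn _
      _ ≤ Real.log (n / m) + Real.log ((n + 1 : ℕ) / n) :=
          add_le_add ih (one_div_succ_le_log_div hn)
      _ = Real.log ((n + 1 : ℕ) / m) := by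
          rw [← Real.log_mul (by positivity) (by positivity), mul_comm,
            div_mul_div_cancel₀ (by positivity)]

lemma sum_Ioc_floor_one_div_le {t b : ℝ} (ht : 0 < t) (hb : 0 ≤ b) :
    ∑ k ∈ Ioc ⌊t⌋₊ ⌊b⌋₊, 1 / (k : ℝ) ≤ b / t / Real.exp 1 + 1 / t := by
  rcases le_or_gt ⌊b⌋₊ ⌊t⌋₊ with hle | hlt
  · rw [Ioc_eq_empty_of_le hle, sum_empty]
    positivity
  have first_le : t ≤ ((⌊t⌋₊ + 1 : ℕ) : ℝ) := mod_cast (Nat.lt_floor_add_one t).le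
  have last_pos : (0 : ℝ) < ⌊b⌋₊ := mod_cast (Nat.zero_le _).trans_lt hlt
  calc ∑ k ∈ Ioc ⌊t⌋₊ ⌊b⌋₊, 1 / (k : ℝ)
      = ∑ k ∈ Ioc (⌊t⌋₊ + 1) ⌊b⌋₊, 1 / (k : ℝ) + 1 / ((⌊t⌋₊ + 1 : ℕ) : ℝ) := by
        rw [← Icc_add_one_left_eq_Ioc, ← add_sum_Ioc_eq_sum_Icc hlt, add_comm]
    _ ≤ Real.log (⌊b⌋₊ / (⌊t⌋₊ + 1 : ℕ)) + 1 / t :=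
        add_le_add (sum_Ioc_one_div_le_log_div (Nat.succ_pos _) hlt)
          (one_div_le_one_div_of_le ht first_le)
    _ ≤ ⌊b⌋₊ / (⌊t⌋₊ + 1 : ℕ) / Real.exp 1 + 1 / t := by
        gcongr
        exact log_le_div_exp_one (by positivity)
    _ ≤ b / t / Real.exp 1 + 1 / t := by
        gcongr
        exact Nat.floor_le hb

end HarmonicSums

/-- The indices `2 ≤ k ≤ β` with `β ^ (4 + 2 * j) / k < y`, written without division: for
`y = x + 1` these are the `k` that can contribute at level `j` to the sum over `n ≤ x`. -/
noncomputable def levelIndices (β y : ℝ) (j : ℕ) : Finset ℕ :=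
  {k ∈ Icc 2 ⌊β⌋₊ | β ^ (4 + 2 * j) < k * y}

/-- The contribution `∑ β ^ (4 + 2 * j) / k` of level `j`, without the factor `α = β⁻¹` and for a
single value of `h`. -/
noncomputable def levelSum (β y : ℝ) (j : ℕ) : ℝ :=
  ∑ k ∈ levelIndices β y j, β ^ (4 + 2 * j) / k

section Levels

variable {β y : ℝ} {j : ℕ}

lemma mem_levelIndices {k : ℕ} :
    k ∈ levelIndices β y j ↔ 2 ≤ k ∧ (k : ℝ) ≤ β ∧ β ^ (4 + 2 * j) < k * y := by
  rw [levelIndices, mem_filter, mem_Icc, and_assoc]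
  exact and_congr_right fun hk ↦ and_congr_left' (Nat.le_floor_iff' (by lia))

lemma mem_levelIndices_of_floor_add_one_le {k : ℕ} (hk : 2 ≤ k) (hkβ : (k : ℝ) ≤ β)
    (hy : (⌊β ^ (4 + 2 * j) / k⌋₊ : ℝ) + 1 ≤ y) :
    k ∈ levelIndices β y j := by
  have hk₀ : (0 : ℝ) < k := mod_cast (by lia : 0 < k)
  exact mem_levelIndices.2
    ⟨hk, hkβ, (div_lt_iff₀' hk₀).1 ((Nat.lt_floor_add_one _).trans_le hy)⟩

lemma levelIndices_eq_empty (hyj : y ≤ β ^ (3 + 2 * j)) : levelIndices β y j = ∅ := by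
  refine eq_empty_of_forall_notMem fun k hk ↦ ?_
  obtain ⟨-, hkβ, hlt⟩ := mem_levelIndices.1 hk
  have hβ : 0 ≤ β := k.cast_nonneg.trans hkβ
  refine hlt.not_ge ?_
  calc (k : ℝ) * y ≤ k * β ^ (3 + 2 * j) := by gcongr
    _ ≤ β * β ^ (3 + 2 * j) := by gcongr
    _ = β ^ (4 + 2 * j) := by ring

lemma levelSum_eq_zero (hyj : y ≤ β ^ (3 + 2 * j)) : levelSum β y j = 0 := by
  rw [levelSum, levelIndices_eq_empty hyj, sum_empty]

lemma levelSum_le_pow_mul (hβ : 1 ≤ β) (y : ℝ) (j : ℕ) :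
    levelSum β y j ≤ β ^ (4 + 2 * j) * (β - 1) / 2 := by
  have hβ₀ : 0 ≤ β := zero_le_one.trans hβ
  have floor_pos : 1 ≤ ⌊β⌋₊ := (Nat.one_le_floor_iff β).2 hβ
  have card_le : ((levelIndices β y j).card : ℝ) ≤ β - 1 := by
    calc ((levelIndices β y j).card : ℝ) ≤ (Icc 2 ⌊β⌋₊).card := mod_cast card_filter_le _ _
      _ = ⌊β⌋₊ - 1 := by
          rw [Nat.card_Icc, show ⌊β⌋₊ + 1 - 2 = ⌊β⌋₊ - 1 by lia, Nat.cast_sub floor_pos,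
            Nat.cast_one]
      _ ≤ β - 1 := by gcongr; exact Nat.floor_le hβ₀
  calc levelSum β y j ≤ (levelIndices β y j).card • (β ^ (4 + 2 * j) / 2) := by
        refine sum_le_card_nsmul _ _ _ fun k hk ↦ ?_
        have hk2 : (2 : ℝ) ≤ k := mod_cast (mem_levelIndices.1 hk).1
        gcongr
    _ ≤ (β - 1) * (β ^ (4 + 2 * j) / 2) := by
        rw [nsmul_eq_mul]
        gcongr
    _ = β ^ (4 + 2 * j) * (β - 1) / 2 := by ring

lemma levelSum_le_mul_div_exp_one (hβ : 0 < β) (hy : 0 < y) (j : ℕ) :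
    levelSum β y j ≤ y * (β / Real.exp 1 + 1) := by
  set P := β ^ (4 + 2 * j)
  have P_pos : 0 < P := by positivity
  have subset_Ioc : levelIndices β y j ⊆ Ioc ⌊P / y⌋₊ ⌊β⌋₊ := fun k hk ↦ by
    obtain ⟨-, hkβ, hlt⟩ := mem_levelIndices.1 hk
    exact mem_Ioc.2 ⟨(Nat.floor_lt (by positivity)).2 ((div_lt_iff₀ hy).2 hlt),
      Nat.le_floor hkβ⟩
  calc levelSum β y j ≤ ∑ k ∈ Ioc ⌊P / y⌋₊ ⌊β⌋₊, P / k :=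
        sum_le_sum_of_subset_of_nonneg subset_Ioc fun k _ _ ↦ by positivity
    _ = P * ∑ k ∈ Ioc ⌊P / y⌋₊ ⌊β⌋₊, 1 / (k : ℝ) := by
        simp only [mul_sum, mul_one_div]
    _ ≤ P * (β / (P / y) / Real.exp 1 + 1 / (P / y)) := by
        gcongr
        exact sum_Ioc_floor_one_div_le (by positivity) hβ.le
    _ = y * (β / Real.exp 1 + 1) := by field_simp

lemma sum_range_levelSum_le_pow (hβ : 1 ≤ β) (y : ℝ) (J : ℕ) :
    ∑ j ∈ range J, levelSum β y j ≤ β ^ (3 + 2 * J) / 2 := by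
  have telescope (j : ℕ) :
      levelSum β y j ≤ β ^ (3 + 2 * (j + 1)) / 2 - β ^ (3 + 2 * j) / 2 := by
    calc levelSum β y j ≤ β ^ (4 + 2 * j) * (β - 1) / 2 := levelSum_le_pow_mul hβ y j
      _ ≤ β ^ (4 + 2 * j) * (β - 1) / 2 + β ^ (3 + 2 * j) * (β - 1) / 2 := by
          have : 0 ≤ β - 1 := sub_nonneg.2 hβ
          exact le_add_of_nonneg_right (by positivity)
      _ = β ^ (3 + 2 * (j + 1)) / 2 - β ^ (3 + 2 * j) / 2 := by ring
  calc ∑ j ∈ range J, levelSum β y j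
      ≤ ∑ j ∈ range J, (β ^ (3 + 2 * (j + 1)) / 2 - β ^ (3 + 2 * j) / 2) :=
        sum_le_sum fun j _ ↦ telescope j
    _ = β ^ (3 + 2 * J) / 2 - β ^ (3 + 2 * 0) / 2 :=
        sum_range_sub (fun j ↦ β ^ (3 + 2 * j) / 2) J
    _ ≤ β ^ (3 + 2 * J) / 2 := sub_le_self _ (by positivity)

lemma sum_range_levelSum_le (hβ : 1 ≤ β) (hy : 0 < y) (J : ℕ) :
    ∑ j ∈ range J, levelSum β y j ≤ y * (β / Real.exp 1 + 3 / 2) := by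
  have hβ₀ : 0 < β := zero_lt_one.trans_le hβ
  induction J with
  | zero =>
    rw [range_zero, sum_empty]
    positivity
  | succ J ih =>
    rw [sum_range_succ]
    rcases le_or_gt y (β ^ (3 + 2 * J)) with hyJ | hJy
    · rwa [levelSum_eq_zero hyJ, add_zero]
    · calc ∑ j ∈ range J, levelSum β y j + levelSum β y J
          ≤ y / 2 + y * (β / Real.exp 1 + 1) := by
            gcongr
            · exact (sum_range_levelSum_le_pow hβ y J).trans (by gcongr)
            · exact levelSum_le_mul_div_exp_one hβ₀ hy J
        _ = y * (β / Real.exp 1 + 3 / 2) := by ring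

end Levels

section Support

variable {α : ℝ}

lemma floor_zpow_div_eq_natFloor (j k : ℕ) :
    ⌊α ^ (-4 - 2 * (j : ℤ)) / k⌋ = (⌊α⁻¹ ^ (4 + 2 * j) / k⌋₊ : ℤ) := by
  have hpow : α ^ (-4 - 2 * (j : ℤ)) = α⁻¹ ^ (4 + 2 * j) := by
    rw [← zpow_natCast, inv_zpow, ← zpow_neg]
    congr 1
    push_cast
    ring
  have hpow_nonneg : 0 ≤ α⁻¹ ^ (4 + 2 * j) := Even.pow_nonneg ⟨2 + j, by ring⟩ _
  rw [hpow, Int.natCast_floor_eq_floor (by positivity)]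

lemma exists_eq_floor_add_of_fAlpha_ne_zero (hα : 0 < α) {n : ℕ} (hn : fAlpha α n ≠ 0) :
    ∃ h j k : ℕ, h ≤ 1 ∧ 2 ≤ k ∧ (k : ℝ) ≤ α⁻¹ ∧ n = ⌊α⁻¹ ^ (4 + 2 * j) / k⌋₊ + h ∧
      |fAlpha α n| ≤ α * (α⁻¹ ^ (4 + 2 * j) / k) := by
  rw [fAlpha] at hn ⊢
  split_ifs at hn ⊢ with hex
  · obtain ⟨hh, hk, hkα, hnk⟩ := hex.choose_spec
    generalize hex.choose = t at hh hk hkα hnk ⊢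
    obtain ⟨h, j, k⟩ := t
    rw [floor_zpow_div_eq_natFloor] at hnk ⊢
    refine ⟨h, j, k, hh, hk, hkα, mod_cast hnk, ?_⟩
    rw [abs_mul, abs_mul, abs_neg_one_pow, one_mul, abs_of_pos hα, Int.cast_natCast, Nat.abs_cast]
    gcongr
    exact Nat.floor_le (by positivity)
  · exact absurd rfl hn

lemma fAlpha_eq_zero_of_inv_lt_two (hα : 0 < α) (hα₂ : α⁻¹ < 2) (n : ℕ) : fAlpha α n = 0 := by
  by_contra hn
  obtain ⟨-, -, k, -, hk, hkα, -⟩ := exists_eq_floor_add_of_fAlpha_ne_zero hα hn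
  have hk2 : (2 : ℝ) ≤ k := mod_cast hk
  exact hα₂.not_ge (hk2.trans hkα)

lemma exists_sum_abs_fAlpha_le_sum_levelSum (hα₁ : 1 < α⁻¹) {x : ℝ} (hx : 0 ≤ x) :
    ∃ J : ℕ, ∑ n ∈ Icc 1 ⌊x⌋₊, |fAlpha α n|
      ≤ 2 * α * ∑ j ∈ range J, levelSum α⁻¹ (x + 1) j := by
  set β := α⁻¹
  have hβ : 0 < β := zero_lt_one.trans hα₁
  have hα : 0 < α := inv_pos.1 hβ
  obtain ⟨J, hJ⟩ := pow_unbounded_of_one_lt (x + 1) hα₁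
  have level_lt {j k : ℕ} (hk : k ∈ levelIndices β (x + 1) j) : j < J := by
    by_contra! hJj
    have hyj : x + 1 ≤ β ^ (3 + 2 * j) := hJ.le.trans (pow_le_pow_right₀ hα₁.le (by lia))
    exact notMem_empty k (levelIndices_eq_empty hyj ▸ hk)
  refine ⟨J, ?_⟩
  calc ∑ n ∈ Icc 1 ⌊x⌋₊, |fAlpha α n|
      ≤ ∑ t ∈ range 2 ×ˢ (range J).sigma (levelIndices β (x + 1)),
          α * (β ^ (4 + 2 * t.2.1) / t.2.2) := by
        refine sum_le_sum_of_ne_zero_exists_le (fun t ↦ ⌊β ^ (4 + 2 * t.2.1) / t.2.2⌋₊ + t.1)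
          (fun t _ ↦ by positivity) fun n hn hfn ↦ ?_
        obtain ⟨h, j, k, hh, hk, hkβ, hnk, hle⟩ :=
          exists_eq_floor_add_of_fAlpha_ne_zero hα (abs_ne_zero.1 hfn)
        have hnx : (n : ℝ) ≤ x := (Nat.le_floor_iff hx).1 (mem_Icc.1 hn).2
        have hfloor : (⌊β ^ (4 + 2 * j) / k⌋₊ : ℝ) ≤ n := mod_cast hnk ▸ Nat.le_add_right _ h
        have hmem : k ∈ levelIndices β (x + 1) j :=
          mem_levelIndices_of_floor_add_one_le hk hkβ (by linarith)
        exact ⟨⟨h, j, k⟩, mem_product.2 ⟨mem_range.2 (Nat.lt_succ_of_le hh),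
          mem_sigma.2 ⟨mem_range.2 (level_lt hmem), hmem⟩⟩, hnk.symm, hle⟩
    _ = 2 * α * ∑ j ∈ range J, levelSum β (x + 1) j := by
        simp only [sum_product, sum_const, card_range, sum_sigma, nsmul_eq_mul, levelSum, mul_sum,
          Nat.cast_ofNat, mul_assoc]

end Support

theorem G_alpha_bound_general {α : ℝ} (hα : 0 < α) {x : ℝ} (hx : 0 ≤ x) :
    ∑ n ∈ Icc 1 ⌊x⌋₊, |fAlpha α n| ≤ (x + 1) * (2 / Real.exp 1 + 3 * α) := by
  rcases lt_or_ge α⁻¹ 2 with hα₂ | hα₂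
  · rw [sum_eq_zero fun n _ ↦ by rw [fAlpha_eq_zero_of_inv_lt_two hα hα₂, abs_zero]]
    positivity
  have hα₁ : 1 < α⁻¹ := one_lt_two.trans_le hα₂
  obtain ⟨J, hJ⟩ := exists_sum_abs_fAlpha_le_sum_levelSum hα₁ hx
  calc ∑ n ∈ Icc 1 ⌊x⌋₊, |fAlpha α n|
      ≤ 2 * α * ∑ j ∈ range J, levelSum α⁻¹ (x + 1) j := hJ
    _ ≤ 2 * α * ((x + 1) * (α⁻¹ / Real.exp 1 + 3 / 2)) := by
        gcongr
        exact sum_range_levelSum_le hα₁.le (by positivity) J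
    _ = (x + 1) * (2 / Real.exp 1 + 3 * α) := by field_simp

/-- Let `α > 0` with `α⁻¹` an integer `≥ 2`, and `G_α(x) = ∑_{n ≤ x} |f_α(n)|`.
Then for every real `x > 0`, `G_α(x) ≤ (x+1)(2/e + 3α)`. -/
theorem G_alpha_bound (α : ℝ) (hα : 0 < α)
    (hint : ∃ m : ℤ, 2 ≤ m ∧ (m : ℝ) = α⁻¹) (x : ℝ) (hx : 0 < x) :
    ∑ n ∈ Finset.Icc 1 ⌊x⌋₊, |fAlpha α n|
      ≤ (x + 1) * (2 / Real.exp 1 + 3 * α) :=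
  G_alpha_bound_general hα hx.le
end

section
/- Let α > 0 be a real number such that α^{−1} is an integer ≥ 2, let J be a non-negative integer, and set N = α^{−4−2J}. Then 0 < ∑_{αN ≤ n ≤ N} f_α(n)/n < 1/(N α), where the sum is over integers n with αN ≤ n ≤ N. -/
open Classical

/-!
Put `m = α⁻¹` and `M = m ^ (4 + 2 * J) = N`. The part of the support of `fAlpha α` with index `j`
lies between `m ^ (3 + 2 * j)` and `m ^ (4 + 2 * j)`; these ranges are disjoint, and `[αN, N]` is
the one with index `J`. The support there consists of the pairs `q, q + 1` with `q = ⌊M / k⌋`, which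
do not overlap because the quotients of distinct `k` differ by at least `2`. Such a pair contributes
`α * q / q - α * q / (q + 1) = α / (q + 1)`, which is positive, and smaller than `1 / N` because
`(q + 1) * m ≥ (q + 1) * k > N`. There are `m - 1 < 1 / α` pairs.
-/

lemma div_add_two_le_div {M k l : ℕ} (hk : 0 < k) (hkl : k < l) (hM : 2 * k * l ≤ M) :
    M / l + 2 ≤ M / k := by
  have hl : 0 < l := hk.trans hkl
  rw [Nat.le_div_iff_mul_le hk, ← Nat.add_mul_div_right M 2 hl]
  refine Nat.le_of_mul_le_mul_right ?_ hl
  calc (M + 2 * l) / l * k * l = (M + 2 * l) / l * l * k := by ring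
    _ ≤ (M + 2 * l) * k := by gcongr; exact Nat.div_mul_le_self _ _
    _ = M * k + 2 * k * l := by ring
    _ ≤ M * k + M := by gcongr
    _ = M * (k + 1) := by ring
    _ ≤ M * l := by gcongr; exact hkl

lemma injOn_div_add {M m : ℕ} (hM : 2 * m ^ 2 ≤ M) :
    Set.InjOn (fun p : ℕ × ℕ ↦ M / p.1 + p.2) (Set.Icc 1 m ×ˢ Set.Iic 1) := by
  have gap {k l : ℕ} (hk : 1 ≤ k) (hkl : k < l) (hlm : l ≤ m) : M / l + 2 ≤ M / k := by
    refine div_add_two_le_div hk hkl (le_trans ?_ hM)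
    rw [mul_assoc, sq]
    gcongr
    exact hkl.le.trans hlm
  rintro ⟨k, h⟩ ⟨⟨hk, hkm⟩, hh⟩ ⟨l, i⟩ ⟨⟨hl, hlm⟩, hi⟩ e
  simp only [Set.mem_Iic] at hk hkm hh hl hlm hi e
  rcases lt_trichotomy k l with hkl | rfl | hlk
  · have := gap hk hkl hlm
    omega
  · rw [Nat.add_left_cancel e]
  · have := gap hl hlk hkm
    omega

lemma pow_succ_div_add_mem_Icc {m k h : ℕ} (e : ℕ) (hk : 2 ≤ k) (hkm : k ≤ m) (hh : h ≤ 1) :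
    m ^ (e + 1) / k + h ∈ Finset.Icc (m ^ e) (m ^ (e + 1)) := by
  have lower : m ^ e ≤ m ^ (e + 1) / k := by
    rw [Nat.le_div_iff_mul_le (by omega), pow_succ]
    gcongr
  have upper : m ^ (e + 1) / k ≤ m ^ (e + 1) / 2 := Nat.div_le_div_left hk two_pos
  have two_le : 2 ≤ m ^ (e + 1) := (hk.trans hkm).trans (Nat.le_self_pow e.succ_ne_zero m)
  rw [Finset.mem_Icc]
  omega

lemma eq_of_mem_Icc_pow {m n i j : ℕ} (hm : 1 < m)
    (hi : n ∈ Finset.Icc (m ^ (3 + 2 * i)) (m ^ (4 + 2 * i)))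
    (hj : n ∈ Finset.Icc (m ^ (3 + 2 * j)) (m ^ (4 + 2 * j))) : i = j := by
  rw [Finset.mem_Icc] at hi hj
  have hij := (Nat.pow_le_pow_iff_right hm).1 (hi.1.trans hj.2)
  have hji := (Nat.pow_le_pow_iff_right hm).1 (hj.1.trans hi.2)
  omega

lemma two_mul_sq_le_pow {m e : ℕ} (hm : 2 ≤ m) (he : 3 ≤ e) : 2 * m ^ 2 ≤ m ^ e :=
  calc 2 * m ^ 2 ≤ m * m ^ 2 := by gcongr
    _ = m ^ 3 := by ring
    _ ≤ m ^ e := Nat.pow_le_pow_right (by omega) he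

/-- `IsFAlphaRepr m n h j k` says that `(h, j, k)` represents `n` as in the definition of
`fAlpha (m : ℝ)⁻¹ n`, with the floor of a real quotient replaced by division in `ℕ`. -/
structure IsFAlphaRepr (m n h j k : ℕ) : Prop where
  le_one : h ≤ 1
  two_le : 2 ≤ k
  le : k ≤ m
  eq : n = m ^ (4 + 2 * j) / k + h

namespace IsFAlphaRepr

variable {m n h j k : ℕ}

lemma mem_Icc (r : IsFAlphaRepr m n h j k) :
    n ∈ Finset.Icc (m ^ (3 + 2 * j)) (m ^ (4 + 2 * j)) := by
  have hmem := pow_succ_div_add_mem_Icc (3 + 2 * j) r.two_le r.le r.le_one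
  rwa [show 3 + 2 * j + 1 = 4 + 2 * j by ring, ← r.eq] at hmem

lemma prodMk_mem (r : IsFAlphaRepr m n h j k) : (k, h) ∈ Set.Icc 1 m ×ˢ Set.Iic 1 :=
  ⟨⟨one_le_two.trans r.two_le, r.le⟩, r.le_one⟩

lemma unique {h' j' k' : ℕ} (r : IsFAlphaRepr m n h j k) (r' : IsFAlphaRepr m n h' j' k') :
    h = h' ∧ j = j' ∧ k = k' := by
  have hm : 2 ≤ m := r.two_le.trans r.le
  obtain rfl : j = j' := eq_of_mem_Icc_pow hm r.mem_Icc r'.mem_Icc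
  have hkh : (k, h) = (k', h') := injOn_div_add (two_mul_sq_le_pow hm (by omega))
    r.prodMk_mem r'.prodMk_mem (r.eq.symm.trans r'.eq)
  exact ⟨congrArg Prod.snd hkh, rfl, congrArg Prod.fst hkh⟩

end IsFAlphaRepr

lemma inv_natCast_zpow_neg_four_sub (m j : ℕ) :
    (m : ℝ)⁻¹ ^ (-4 - 2 * (j : ℤ)) = (m ^ (4 + 2 * j) : ℕ) := by
  rw [inv_zpow', show -(-4 - 2 * (j : ℤ)) = (4 + 2 * j : ℕ) by push_cast; ring, zpow_natCast,
    Nat.cast_pow]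

lemma floor_inv_natCast_zpow_neg_four_sub_div (m j k : ℕ) :
    ⌊(m : ℝ)⁻¹ ^ (-4 - 2 * (j : ℤ)) / k⌋ = (m ^ (4 + 2 * j) / k : ℕ) := by
  rw [inv_natCast_zpow_neg_four_sub, ← Nat.floor_div_eq_div (K := ℝ),
    Int.natCast_floor_eq_floor (by positivity)]

lemma isFAlphaRepr_iff {m n h j k : ℕ} :
    IsFAlphaRepr m n h j k ↔ h ≤ 1 ∧ 2 ≤ k ∧ (k : ℝ) ≤ (m : ℝ)⁻¹⁻¹ ∧
      (n : ℤ) = ⌊(m : ℝ)⁻¹ ^ (-4 - 2 * (j : ℤ)) / k⌋ + h := by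
  rw [floor_inv_natCast_zpow_neg_four_sub_div, inv_inv, Nat.cast_le]
  norm_cast
  exact ⟨fun ⟨hh, hk, hkm, e⟩ ↦ ⟨hh, hk, hkm, e⟩, fun ⟨hh, hk, hkm, e⟩ ↦ ⟨hh, hk, hkm, e⟩⟩

lemma IsFAlphaRepr.fAlpha_eq {m n h j k : ℕ} (r : IsFAlphaRepr m n h j k) :
    fAlpha (m : ℝ)⁻¹ n = (-1) ^ h * (m : ℝ)⁻¹ * (m ^ (4 + 2 * j) / k : ℕ) := by
  have hex : ∃ t : ℕ × ℕ × ℕ, t.1 ≤ 1 ∧ 2 ≤ t.2.2 ∧ (t.2.2 : ℝ) ≤ (m : ℝ)⁻¹⁻¹ ∧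
      (n : ℤ) = ⌊(m : ℝ)⁻¹ ^ (-4 - 2 * (t.2.1 : ℤ)) / t.2.2⌋ + t.1 :=
    ⟨(h, j, k), isFAlphaRepr_iff.1 r⟩
  obtain ⟨hh, hj, hk⟩ := r.unique (isFAlphaRepr_iff.2 hex.choose_spec)
  rw [fAlpha, dif_pos hex, ← hh, ← hj, ← hk, floor_inv_natCast_zpow_neg_four_sub_div,
    Int.cast_natCast]

lemma fAlpha_eq_zero {m n : ℕ} (hn : ∀ h j k, ¬ IsFAlphaRepr m n h j k) :
    fAlpha (m : ℝ)⁻¹ n = 0 :=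
  dif_neg fun ⟨_, ht⟩ ↦ hn _ _ _ (isFAlphaRepr_iff.2 ht)

lemma sum_range_two_fAlpha_div {m k : ℕ} (j : ℕ) (hk : 2 ≤ k) (hkm : k ≤ m) :
    ∑ h ∈ Finset.range 2, fAlpha (m : ℝ)⁻¹ (m ^ (4 + 2 * j) / k + h) /
        (m ^ (4 + 2 * j) / k + h : ℕ) =
      (m : ℝ)⁻¹ / ((m ^ (4 + 2 * j) / k : ℕ) + 1) := by
  have hq : ((m ^ (4 + 2 * j) / k : ℕ) : ℝ) ≠ 0 := by
    have : k ≤ m ^ (4 + 2 * j) := hkm.trans (Nat.le_self_pow (by omega) m)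
    exact_mod_cast (Nat.div_pos this (by omega)).ne'
  rw [Finset.sum_range_succ, Finset.sum_range_one,
    IsFAlphaRepr.fAlpha_eq ⟨zero_le_one, hk, hkm, rfl⟩,
    IsFAlphaRepr.fAlpha_eq ⟨le_rfl, hk, hkm, rfl⟩]
  generalize m ^ (4 + 2 * j) / k = q at hq ⊢
  push_cast
  field_simp
  ring

lemma sum_Icc_fAlpha_div (m J : ℕ) :
    ∑ n ∈ Finset.Icc (m ^ (3 + 2 * J)) (m ^ (4 + 2 * J)), fAlpha (m : ℝ)⁻¹ n / n =
      ∑ k ∈ Finset.Icc 2 m, (m : ℝ)⁻¹ / ((m ^ (4 + 2 * J) / k : ℕ) + 1) := by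
  let point (p : ℕ × ℕ) : ℕ := m ^ (4 + 2 * J) / p.1 + p.2
  have repr_point {p : ℕ × ℕ} (hp : p ∈ Finset.Icc 2 m ×ˢ Finset.range 2) :
      IsFAlphaRepr m (point p) p.2 J p.1 := by
    rw [Finset.mem_product, Finset.mem_Icc, Finset.mem_range] at hp
    exact ⟨Nat.le_of_lt_succ hp.2, hp.1.1, hp.1.2, rfl⟩
  have point_injOn : Set.InjOn point (Finset.Icc 2 m ×ˢ Finset.range 2 : Finset (ℕ × ℕ)) := by
    intro p hp p' hp' e
    obtain ⟨hh, -, hk⟩ := (repr_point hp).unique (e ▸ repr_point hp')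
    exact Prod.ext hk hh
  calc
    _ = ∑ p ∈ Finset.Icc 2 m ×ˢ Finset.range 2, fAlpha (m : ℝ)⁻¹ (point p) / point p := by
      refine (Finset.sum_of_injOn point point_injOn (fun p hp ↦ (repr_point hp).mem_Icc)
        (fun n hn hn' ↦ ?_) fun _ _ ↦ rfl).symm
      rw [fAlpha_eq_zero, zero_div]
      intro h j k r
      obtain rfl : j = J := eq_of_mem_Icc_pow (r.two_le.trans r.le) r.mem_Icc hn
      refine hn' ⟨(k, h), ?_, r.eq.symm⟩
      simpa [Nat.lt_succ_iff] using And.intro ⟨r.two_le, r.le⟩ r.le_one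
    _ = _ := by
      rw [Finset.sum_product]
      refine Finset.sum_congr rfl fun k hk ↦ ?_
      rw [Finset.mem_Icc] at hk
      exact sum_range_two_fAlpha_div J hk.1 hk.2

lemma inv_div_div_add_one_lt {M m k : ℕ} (hM : 0 < M) (hk : 0 < k) (hkm : k ≤ m) :
    (m : ℝ)⁻¹ / ((M / k : ℕ) + 1) < 1 / M := by
  have hlt : M < m * (M / k + 1) := (Nat.lt_mul_div_succ M hk).trans_le (by gcongr)
  rw [← one_div, div_div]
  exact one_div_lt_one_div_of_lt (by exact_mod_cast hM) (by exact_mod_cast hlt)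

lemma sum_inv_div_div_add_one_lt {M m : ℕ} (hM : 0 < M) (hm : 0 < m) :
    ∑ k ∈ Finset.Icc 2 m, (m : ℝ)⁻¹ / ((M / k : ℕ) + 1) < m / M :=
  calc ∑ k ∈ Finset.Icc 2 m, (m : ℝ)⁻¹ / ((M / k : ℕ) + 1)
      ≤ ∑ _k ∈ Finset.Icc 2 m, 1 / (M : ℝ) := by
        refine Finset.sum_le_sum fun k hk ↦ ?_
        rw [Finset.mem_Icc] at hk
        exact (inv_div_div_add_one_lt hM (by omega) hk.2).le
    _ = (m - 1 : ℕ) / (M : ℝ) := by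
        rw [Finset.sum_const, Nat.card_Icc, nsmul_eq_mul, mul_one_div, Nat.add_sub_add_right m 1 1]
    _ < m / M := by
        gcongr
        omega

/-- Let `α > 0` with `α⁻¹` an integer `≥ 2`, let `J ∈ ℕ` and `N = α^(-4-2J)`
(a positive integer). Then `0 < ∑_{αN ≤ n ≤ N} f_α(n)/n < 1/(Nα)`. -/
theorem fAlpha_sum_bound (α : ℝ) (hα : 0 < α)
    (hint : ∃ m : ℤ, 2 ≤ m ∧ (m : ℝ) = α⁻¹) (J : ℕ) (N : ℝ)
    (hN : N = α ^ (-4 - 2 * (J : ℤ))) :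
    0 < ∑ n ∈ Finset.Icc ⌈α * N⌉₊ ⌊N⌋₊, fAlpha α n / n ∧
      ∑ n ∈ Finset.Icc ⌈α * N⌉₊ ⌊N⌋₊, fAlpha α n / n < 1 / (N * α) := by
  obtain ⟨m, rfl, hm⟩ : ∃ m : ℕ, α = (m : ℝ)⁻¹ ∧ 2 ≤ m := by
    obtain ⟨m, hm, hmα⟩ := hint
    lift m to ℕ using by omega
    exact ⟨m, by rw [← inv_inv α, ← hmα, Int.cast_natCast], by exact_mod_cast hm⟩
  have hm0 : (m : ℝ) ≠ 0 := by positivity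
  have hM : 0 < m ^ (4 + 2 * J) := by positivity
  rw [inv_natCast_zpow_neg_four_sub] at hN
  have hαN : (m : ℝ)⁻¹ * N = (m ^ (3 + 2 * J) : ℕ) := by
    rw [hN, show 4 + 2 * J = 3 + 2 * J + 1 by ring, pow_succ']
    push_cast
    exact inv_mul_cancel_left₀ hm0 _
  rw [hαN, hN, Nat.ceil_natCast, Nat.floor_natCast, sum_Icc_fAlpha_div]
  constructor
  · exact Finset.sum_pos (fun k _ ↦ by positivity) ⟨2, Finset.mem_Icc.2 ⟨le_rfl, hm⟩⟩
  · calc _ < (m : ℝ) / (m ^ (4 + 2 * J) : ℕ) := sum_inv_div_div_add_one_lt hM (by omega)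
      _ = 1 / ((m ^ (4 + 2 * J) : ℕ) * (m : ℝ)⁻¹) := by field_simp
end
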